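/- arXiv:1712.10124 — 12 statements merged into one kernel-verified Lean document; each statement's English description precedes it below -/
import Mathlib

section
/- Let h be a positive integer, let m : ℕ → ℕ be any function, and let C(X) := ∏_{d | h} Φ_d(X)^{m(h/d)} ∈ ℂ[X], where Φ_d is the d-th cyclotomic polynomial. Then for every q ∈ ℂ with q^h ≠ 1, the logarithmic derivative of C satisfies C′(q)/C(q) = ∑_{d | h} m(h/d) · ( ∑_{j=1}^{d} c_d(j) q^{j-1} ) / (q^d − 1), where c_d(j) := ∑_{ζ} ζ^j is the Ramanujan sum, the sum running over all primitive d-th roots of unity ζ in ℂ. -/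
/-!
Logarithmic differentiation reduces the formula to a single `Φ_d`, for which
`Φ_d′(q) / Φ_d(q) = ∑_ζ 1 / (q - ζ)` over the primitive `d`-th roots of unity `ζ`. These are
permuted by inversion, so each `ζ` may be replaced by `ζ⁻¹`, and since `ζ ^ d = 1` a geometric sum
gives `(q ^ d - 1) / (q - ζ⁻¹) = ∑_{j=1}^{d} ζ ^ j q ^ (j - 1)`. Summing over `ζ` yields the
Ramanujan sums.
-/

open Polynomial Finset

theorem eval_cyclotomic_ne_zero_of_pow_ne_one {R : Type*} [CommRing R] {d : ℕ} {q : R}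
    (hq : q ^ d ≠ 1) : (cyclotomic d R).eval q ≠ 0 := by
  intro hzero
  have hdvd : (cyclotomic d R).eval q ∣ q ^ d - 1 := by
    simpa using eval_dvd (x := q) (cyclotomic.dvd_X_pow_sub_one d R)
  rw [hzero, zero_dvd_iff, sub_eq_zero] at hdvd
  exact hq hdvd

section

variable {K : Type*} [Field K]

theorem eval_derivative_prod_div_eval_prod {ι : Type*} (s : Finset ι) (f : ι → K[X]) {q : K}
    (hf : ∀ i ∈ s, (f i).eval q ≠ 0) :
    (derivative (∏ i ∈ s, f i)).eval q / (∏ i ∈ s, f i).eval q =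
      ∑ i ∈ s, (derivative (f i)).eval q / (f i).eval q := by
  classical
  rw [derivative_prod_finset, eval_finsetSum, sum_div]
  refine sum_congr rfl fun i hi ↦ ?_
  have hrest : (∏ j ∈ s.erase i, f j).eval q ≠ 0 := by
    rw [eval_prod]
    exact prod_ne_zero_iff.2 fun j hj ↦ hf j (mem_of_mem_erase hj)
  rw [← prod_erase_mul s f hi, eval_mul, eval_mul, mul_div_mul_left _ _ hrest]

theorem eval_derivative_pow_div_eval_pow (f : K[X]) (n : ℕ) {q : K} (hf : f.eval q ≠ 0) :
    (derivative (f ^ n)).eval q / (f ^ n).eval q = n * ((derivative f).eval q / f.eval q) := by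
  simpa using eval_derivative_prod_div_eval_prod (range n) (fun _ ↦ f) fun _ _ ↦ hf

theorem sum_primitiveRoots_comp_inv {M : Type*} [AddCommMonoid M] (d : ℕ) (f : K → M) :
    ∑ ζ ∈ primitiveRoots d K, f ζ⁻¹ = ∑ ζ ∈ primitiveRoots d K, f ζ := by
  refine sum_equiv (Equiv.inv K) (fun ζ ↦ ?_) fun _ _ ↦ rfl
  rcases d.eq_zero_or_pos with rfl | hd
  · simp
  · simp [mem_primitiveRoots hd]

theorem one_div_sub_inv_eq_geom_sum_div {d : ℕ} {ζ q : K} (hζ : ζ ^ d = 1) (hq : q ^ d ≠ 1) :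
    1 / (q - ζ⁻¹) = (∑ j ∈ Icc 1 d, ζ ^ j * q ^ (j - 1)) / (q ^ d - 1) := by
  have hd : d ≠ 0 := by
    rintro rfl
    exact hq (pow_zero q)
  have hζ0 : ζ ≠ 0 := by
    rintro rfl
    simp [hd] at hζ
  have hqζ : q - ζ⁻¹ ≠ 0 := by
    intro hzero
    rw [sub_eq_zero.1 hzero, inv_pow, hζ, inv_one] at hq
    exact hq rfl
  have hsum : ∑ j ∈ Icc 1 d, ζ ^ j * q ^ (j - 1) = ζ * ∑ i ∈ range d, (ζ * q) ^ i := by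
    rw [← Ico_add_one_right_eq_Icc, sum_Ico_eq_sum_range, Nat.add_sub_cancel, mul_sum]
    refine sum_congr rfl fun i _ ↦ ?_
    rw [Nat.add_sub_cancel_left]
    ring
  rw [div_eq_div_iff hqζ (sub_ne_zero.2 hq), one_mul]
  calc q ^ d - 1 = (∑ i ∈ range d, (ζ * q) ^ i) * (ζ * q - 1) := by
        rw [geom_sum_mul, mul_pow, hζ, one_mul]
    _ = (∑ j ∈ Icc 1 d, ζ ^ j * q ^ (j - 1)) * (q - ζ⁻¹) := by
        rw [hsum]
        field_simp

variable (K) in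
/-- The Ramanujan sum `c_d(j)`: the sum of the `j`-th powers of the primitive `d`-th roots of unity
in `K`, for a natural exponent `j`. If `K` contains no such root of unity, its value is the
empty sum `0` rather than the image in `K` of the classical integer. -/
noncomputable def ramanujanSum (d j : ℕ) : K := ∑ ζ ∈ primitiveRoots d K, ζ ^ j

theorem sum_one_div_sub_primitiveRoots {d : ℕ} {q : K} (hq : q ^ d ≠ 1) :
    ∑ ζ ∈ primitiveRoots d K, 1 / (q - ζ) =
      (∑ j ∈ Icc 1 d, ramanujanSum K d j * q ^ (j - 1)) / (q ^ d - 1) := by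
  calc ∑ ζ ∈ primitiveRoots d K, 1 / (q - ζ)
      = ∑ ζ ∈ primitiveRoots d K, 1 / (q - ζ⁻¹) :=
        (sum_primitiveRoots_comp_inv d fun ζ ↦ 1 / (q - ζ)).symm
    _ = ∑ ζ ∈ primitiveRoots d K, (∑ j ∈ Icc 1 d, ζ ^ j * q ^ (j - 1)) / (q ^ d - 1) :=
        sum_congr rfl fun ζ hζ ↦ one_div_sub_inv_eq_geom_sum_div
          (isPrimitiveRoot_of_mem_primitiveRoots hζ).pow_eq_one hq
    _ = (∑ j ∈ Icc 1 d, ramanujanSum K d j * q ^ (j - 1)) / (q ^ d - 1) := by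
        simp_rw [ramanujanSum, sum_mul]
        rw [← sum_div, sum_comm]

theorem eval_derivative_cyclotomic_div_eval_cyclotomic {d : ℕ} {ω : K} (hω : IsPrimitiveRoot ω d)
    {q : K} (hq : q ^ d ≠ 1) :
    (derivative (cyclotomic d K)).eval q / (cyclotomic d K).eval q =
      (∑ j ∈ Icc 1 d, ramanujanSum K d j * q ^ (j - 1)) / (q ^ d - 1) := by
  have hfactor : ∀ ζ ∈ primitiveRoots d K, (X - C ζ).eval q ≠ 0 := by
    intro ζ hζ hzero
    rw [eval_sub, eval_X, eval_C, sub_eq_zero] at hzero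
    exact hq (hzero ▸ (isPrimitiveRoot_of_mem_primitiveRoots hζ).pow_eq_one)
  rw [cyclotomic_eq_prod_X_sub_primitiveRoots hω, eval_derivative_prod_div_eval_prod _ _ hfactor,
    ← sum_one_div_sub_primitiveRoots hq]
  simp

theorem stmt_0_general (h : ℕ) {ω : K} (hω : IsPrimitiveRoot ω h) (m : ℕ → ℕ) (C : K[X])
    (hC : C = ∏ d ∈ h.divisors, cyclotomic d K ^ m (h / d)) (q : K) (hq : q ^ h ≠ 1) :
    (derivative C).eval q / C.eval q =
      ∑ d ∈ h.divisors, (m (h / d) : K) *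
        ((∑ j ∈ Icc 1 d, ramanujanSum K d j * q ^ (j - 1)) / (q ^ d - 1)) := by
  have hqd : ∀ d ∈ h.divisors, q ^ d ≠ 1 := fun d hd hone ↦ by
    obtain ⟨k, rfl⟩ := Nat.dvd_of_mem_divisors hd
    exact hq (by rw [pow_mul, hone, one_pow])
  have hΦ : ∀ d ∈ h.divisors, (cyclotomic d K).eval q ≠ 0 := fun d hd ↦
    eval_cyclotomic_ne_zero_of_pow_ne_one (hqd d hd)
  have hΦpow : ∀ d ∈ h.divisors, (cyclotomic d K ^ m (h / d)).eval q ≠ 0 := fun d hd ↦ by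
    rw [eval_pow]
    exact pow_ne_zero _ (hΦ d hd)
  rw [hC, eval_derivative_prod_div_eval_prod _ _ hΦpow]
  refine sum_congr rfl fun d hd ↦ ?_
  have hpos : 0 < h := Nat.pos_of_ne_zero (Nat.ne_zero_of_mem_divisors hd)
  have hωd : IsPrimitiveRoot (ω ^ (h / d)) d :=
    hω.pow hpos (Nat.div_mul_cancel (Nat.dvd_of_mem_divisors hd)).symm
  rw [eval_derivative_pow_div_eval_pow _ _ (hΦ d hd),
    eval_derivative_cyclotomic_div_eval_cyclotomic hωd (hqd d hd)]

end

/-- For `C(X) = ∏_{d ∣ h} Φ_d(X)^{m(h/d)}` and `q` with `q^h ≠ 1`,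
`C′(q)/C(q) = ∑_{d ∣ h} m(h/d) · (∑_{j=1}^{d} c_d(j) q^{j-1}) / (q^d − 1)`,
where `c_d(j) = ∑_{ζ primitive d-th root of unity} ζ^j` is the Ramanujan sum. -/
theorem stmt_0 (h : ℕ) (hh : 0 < h) (m : ℕ → ℕ)
    (C : Polynomial ℂ)
    (hC : C = ∏ d ∈ h.divisors, (Polynomial.cyclotomic d ℂ) ^ m (h / d))
    (q : ℂ) (hq : q ^ h ≠ 1) :
    (Polynomial.derivative C).eval q / C.eval q =
      ∑ d ∈ h.divisors, (m (h / d) : ℂ) *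
        ((∑ j ∈ Finset.Icc 1 d, (∑ ζ ∈ primitiveRoots d ℂ, ζ ^ j) * q ^ (j - 1)) /
          (q ^ d - 1)) :=
  stmt_0_general h (Complex.isPrimitiveRoot_exp h hh.ne') m C hC q hq
end

section
/- Let h ≥ 3 be an integer, ε := exp(2πi/h) ∈ ℂ, let k₁ < k₂ < … < k_{φ(h)} be the integers in [1, h−1] coprime to h (so that ε^{k₁}, …, ε^{k_{φ(h)}} are the primitive h-th roots of unity), and let F : ℂ → ℂ be any function. Let L*[F] denote the unique polynomial of degree < φ(h) with L*[F](ε^{k_i}) = F(ε^{k_i}) for all i (the Lagrange interpolation polynomial of F at the primitive h-th roots of unity). Define the (φ(h)+1)×(φ(h)+1) complex matrix M(q) by: M(q)₀₀ = 0; the remaining entries of the first row are M(q)₀,ⱼ = q^{j−1} for j = 1, …, φ(h); the remaining entries of the first column are M(q)ᵢ,₀ = ∑_{l=1}^{φ(h)} ε^{k_l (i−1)} F(ε^{k_l}) for i = 1, …, φ(h); and the remaining φ(h)×φ(h) block is C with Cᵢⱼ = c_h(i+j−2), where c_h(j) is the Ramanujan sum. Then for every q ∈ ℂ, L*[F](q)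 = ( ∏_{p | h, p prime} p^{φ(h)/(p−1)} ) / ( (−1)^{1+φ(h)/2} h^{φ(h)} ) · det M(q). -/
open Polynomial Matrix

/-!
Write `C` for the matrix of power sums `∑ ζ ^ (i + j)` over the primitive `h`-th roots of unity.
Expanding `L` in its coefficient vector `a` shows that the first column of `M q` below the corner
is `C a`, so one column operation clears it and leaves `-∑ aⱼ q ^ j = -L(q)` in the corner: thus
`det M q = -L(q) det C`. Moreover `C` is the trace matrix of the power basis of the `h`-th
cyclotomic field. As the powers of `ζ` are an integral basis, `det C` is the discriminant of
that field.
-/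

section PowerSumMatrix

variable {R : Type*} [CommSemiring R]

theorem eval_eq_sum_fin_of_degree_lt {n : ℕ} {L : R[X]} (hL : L.degree < n) (x : R) :
    L.eval x = ∑ j : Fin n, x ^ (j : ℕ) * L.coeff j := by
  rw [eval_eq_sum_degreeLTEquiv (mem_degreeLT.2 hL)]
  exact Finset.sum_congr rfl fun _ _ ↦ mul_comm _ _

/-- The `n × n` Hankel matrix of power sums `∑ x ^ (i + j)` over a finite set `s`, with `i` and `j`
counted from `0`. For the primitive `h`-th roots of unity its entries are the Ramanujan sums
`c_h(i + j)`. -/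
def powerSumMatrix (s : Finset R) (n : ℕ) : Matrix (Fin n) (Fin n) R :=
  of fun i j ↦ ∑ x ∈ s, x ^ ((i : ℕ) + (j : ℕ))

theorem powerSumMatrix_mulVec_coeff {n : ℕ} {L : R[X]} (hL : L.degree < n) (s : Finset R) :
    powerSumMatrix s n *ᵥ (fun j ↦ L.coeff j) =
      fun i : Fin n ↦ ∑ x ∈ s, x ^ (i : ℕ) * L.eval x := by
  ext i
  simp only [mulVec, dotProduct, powerSumMatrix, of_apply, Finset.sum_mul,
    eval_eq_sum_fin_of_degree_lt hL, Finset.mul_sum, pow_add, mul_assoc]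
  exact Finset.sum_comm

end PowerSumMatrix

section BorderedDeterminant

variable {R : Type*} [CommRing R]

theorem det_fromBlocks_mul₂₁ {m n : Type*} [Fintype m] [Fintype n] [DecidableEq m] [DecidableEq n]
    (A : Matrix m m R) (B : Matrix m n R) (X : Matrix n m R) (D : Matrix n n R) :
    (fromBlocks A B (D * X) D).det = (A - B * X).det * D.det := by
  have hfactor : fromBlocks A B (D * X) D =
      fromBlocks (A - B * X) B 0 D * fromBlocks 1 0 X 1 := by
    simp [fromBlocks_multiply]
  rw [hfactor, det_mul, det_fromBlocks_zero₂₁, det_fromBlocks_zero₁₂, det_one, det_one, mul_one,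
    mul_one]

theorem det_bordered_powerSumMatrix {n : ℕ} {L : R[X]} (hL : L.degree < n) (s : Finset R) (q : R) :
    (fromBlocks 0 (replicateRow (Fin 1) fun j : Fin n ↦ q ^ (j : ℕ))
      (replicateCol (Fin 1) fun i : Fin n ↦ ∑ x ∈ s, x ^ (i : ℕ) * L.eval x)
      (powerSumMatrix s n)).det = -L.eval q * (powerSumMatrix s n).det := by
  rw [← powerSumMatrix_mulVec_coeff hL, replicateCol_mulVec, det_fromBlocks_mul₂₁, zero_sub,
    det_fin_one, neg_apply, replicateRow_mul_replicateCol_apply, eval_eq_sum_fin_of_degree_lt hL]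
  rfl

end BorderedDeterminant

section CyclotomicDiscriminant

variable {n : ℕ} [NeZero n]

section TraceMatrix

variable {K L : Type*} (E : Type*) [Field K] [Field L] [Field E] [Algebra K L] [Algebra K E]
  [IsAlgClosed E] [IsCyclotomicExtension {n} K L] {ζ : L}

theorem algebraMap_trace_pow_eq_sum_primitiveRoots (hζ : IsPrimitiveRoot ζ n)
    (hirr : Irreducible (cyclotomic n K)) (k : ℕ) :
    algebraMap K E (Algebra.trace K L (ζ ^ k)) = ∑ ξ ∈ primitiveRoots n E, ξ ^ k := by
  have := IsCyclotomicExtension.finiteDimensional {n} K L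
  have := IsCyclotomicExtension.isGalois {n} K L
  rw [trace_eq_sum_embeddings E, ← Finset.sum_coe_sort (primitiveRoots n E)]
  refine Fintype.sum_equiv (hζ.embeddingsEquivPrimitiveRoots E hirr) _ _ fun σ ↦ ?_
  rw [map_pow, hζ.embeddingsEquivPrimitiveRoots_apply_coe]

theorem algebraMap_discr_pow_eq_det_powerSumMatrix (hζ : IsPrimitiveRoot ζ n)
    (hirr : Irreducible (cyclotomic n K)) (m : ℕ) :
    algebraMap K E (Algebra.discr K fun i : Fin m ↦ ζ ^ (i : ℕ)) =
      (powerSumMatrix (primitiveRoots n E) m).det := by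
  rw [Algebra.discr_def, RingHom.map_det]
  congr 1
  ext i j
  rw [RingHom.mapMatrix_apply, map_apply, Algebra.traceMatrix_apply, Algebra.traceForm_apply,
    ← pow_add, algebraMap_trace_pow_eq_sum_primitiveRoots E hζ hirr, powerSumMatrix, of_apply]

end TraceMatrix

theorem numberField_discr_eq_discr_pow {K : Type*} [Field K] [NumberField K]
    [IsCyclotomicExtension {n} ℚ K] {ζ : K} (hζ : IsPrimitiveRoot ζ n) :
    (NumberField.discr K : ℚ) = Algebra.discr ℚ fun i : Fin n.totient ↦ ζ ^ (i : ℕ) := by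
  let b := hζ.integralPowerBasis.basis.reindex (finCongr hζ.integralPowerBasis_dim)
  have hb : ⇑(b.localizationLocalization ℚ (nonZeroDivisors ℤ) K) =
      fun i : Fin n.totient ↦ ζ ^ (i : ℕ) := by
    have hgen : algebraMap (NumberField.RingOfIntegers K) K hζ.toInteger = ζ := hζ.coe_toInteger
    ext i
    simp [b, Module.Basis.localizationLocalization_apply, hgen]
  rw [← hb, Algebra.discr_localizationLocalization, NumberField.discr_eq_discr, eq_intCast]

variable (n)

theorem cast_discr_cyclotomicExtension (K E : Type*) [Field K] [NumberField K] [Field E]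
    [CharZero E] [IsCyclotomicExtension {n} ℚ K] :
    (NumberField.discr K : E) = (-1) ^ (n.totient / 2) *
      ((n : E) ^ n.totient / ∏ p ∈ n.primeFactors, (p : E) ^ (n.totient / (p - 1))) := by
  have hdvd : ((∏ p ∈ n.primeFactors, p ^ (n.totient / (p - 1)) : ℕ) : ℤ) ∣
      (n : ℤ) ^ n.totient := by
    exact_mod_cast Nat.prod_primeFactors_pow_totient_ediv_dvd (NeZero.pos n)
  rw [IsCyclotomicExtension.Rat.discr n K, Int.cast_mul, Int.cast_div_charZero hdvd]
  simp

theorem det_powerSumMatrix_primitiveRoots (E : Type*) [Field E] [CharZero E] [IsAlgClosed E] :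
    (powerSumMatrix (primitiveRoots n E) n.totient).det = (-1) ^ (n.totient / 2) *
      ((n : E) ^ n.totient / ∏ p ∈ n.primeFactors, (p : E) ^ (n.totient / (p - 1))) := by
  let K := CyclotomicField n ℚ
  have : IsCyclotomicExtension {n} ℚ K := CyclotomicField.isCyclotomicExtension n ℚ
  have : NumberField K := IsCyclotomicExtension.numberField {n} ℚ K
  have hζ := IsCyclotomicExtension.zeta_spec n ℚ K
  have hirr : Irreducible (cyclotomic n ℚ) := cyclotomic.irreducible_rat (NeZero.pos n)
  rw [← algebraMap_discr_pow_eq_det_powerSumMatrix E hζ hirr, ← numberField_discr_eq_discr_pow hζ,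
    map_intCast, cast_discr_cyclotomicExtension n]

end CyclotomicDiscriminant

/-- Determinant formula for the Lagrange interpolation polynomial `L*[F]`
of a function `F : ℂ → ℂ` at the primitive `h`-th roots of unity (`h ≥ 3`):
`L*[F](q) = (∏_{p ∣ h prime} p^{φ(h)/(p−1)}) / ((−1)^{1+φ(h)/2} h^{φ(h)}) · det M(q)`,
where `M(q)` is the `(φ(h)+1)×(φ(h)+1)` matrix with `M₀₀ = 0`, the rest of the first
row being `q^{j−1}`, the rest of the first column being `∑_ζ ζ^{i−1} F(ζ)` (sum over
primitive `h`-th roots of unity, i.e. `∑_l ε^{k_l(i−1)} F(ε^{k_l})`), and the remaining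
`φ(h)×φ(h)` block being `C` with `C_{ij} = c_h(i+j−2)` (Ramanujan sums). -/
theorem stmt_3 (h : ℕ) (hh : 3 ≤ h) (F : ℂ → ℂ)
    (L : Polynomial ℂ) (hdeg : L.degree < (h.totient : WithBot ℕ))
    (hinterp : ∀ ζ ∈ primitiveRoots h ℂ, L.eval ζ = F ζ)
    (M : ℂ → Matrix (Fin 1 ⊕ Fin h.totient) (Fin 1 ⊕ Fin h.totient) ℂ)
    (hM : ∀ q : ℂ, M q = Matrix.fromBlocks
      (fun (_ : Fin 1) (_ : Fin 1) => (0 : ℂ))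
      (fun (_ : Fin 1) (j : Fin h.totient) => q ^ (j : ℕ))
      (fun (i : Fin h.totient) (_ : Fin 1) =>
        ∑ ζ ∈ primitiveRoots h ℂ, ζ ^ (i : ℕ) * F ζ)
      (fun (i : Fin h.totient) (j : Fin h.totient) =>
        ∑ ζ ∈ primitiveRoots h ℂ, ζ ^ ((i : ℕ) + (j : ℕ))))
    (q : ℂ) :
    L.eval q =
      (∏ p ∈ h.primeFactors, (p : ℂ) ^ (h.totient / (p - 1))) /
        ((-1 : ℂ) ^ (1 + h.totient / 2) * (h : ℂ) ^ h.totient) * (M q).det := by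
  have : NeZero h := ⟨by lia⟩
  have hpow : (h : ℂ) ^ h.totient ≠ 0 := pow_ne_zero _ (NeZero.ne _)
  have hprod : ∏ p ∈ h.primeFactors, (p : ℂ) ^ (h.totient / (p - 1)) ≠ 0 :=
    Finset.prod_ne_zero_iff.2 fun p hp ↦
      pow_ne_zero _ (Nat.cast_ne_zero.2 (Nat.prime_of_mem_primeFactors hp).ne_zero)
  have hvalues (i : Fin h.totient) : ∑ ζ ∈ primitiveRoots h ℂ, ζ ^ (i : ℕ) * F ζ =
      ∑ ζ ∈ primitiveRoots h ℂ, ζ ^ (i : ℕ) * L.eval ζ :=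
    Finset.sum_congr rfl fun ζ hζ ↦ by rw [hinterp ζ hζ]
  have hdet : (M q).det =
      -L.eval q * (powerSumMatrix (primitiveRoots h ℂ) h.totient).det := by
    simp only [hM, hvalues]
    exact det_bordered_powerSumMatrix hdeg _ q
  rw [hdet, det_powerSumMatrix_primitiveRoots, pow_add]
  field_simp
end

section
/- Let h be a positive integer, ε := exp(2πi/h) ∈ ℂ, and let a : ℕ → ℂ satisfy a(k) = a(gcd(k, h)) for every natural number k (with gcd(0, h) = h). Set A(q) := ∑_{k=0}^{h−1} a(k) q^k. Then for every q ∈ ℂ with q^h ≠ 1: A(q)/(1 − q^h) = (1/h) ∑_{d | h} A(ε^{h/d}) · ∑_{d′ | d} d′ μ(d/d′) / (1 − q^{d′}), where μ is the Möbius function. -/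
/-!
Lagrange interpolation of `A` at the `h`-th roots of unity is the partial fraction decomposition
`A(q) / (1 - q ^ h) = (1 / h) ∑_{z ^ h = 1} A(z) · z / (z - q)`. Multiplication by a residue coprime
to `h` permutes the residues mod `h` and preserves `gcd(k, h)`, so `A(z)` depends only on the order
`d` of `z`. Grouping the roots by order leaves the sums of `z / (z - q)` over the primitive `d`-th
roots of unity; decomposing `1 / (1 - q ^ d)` in the same way and Möbius inversion evaluate them.
-/

open Polynomial ArithmeticFunction

section PartialFractions

variable {K : Type*} [Field K]

lemma nodal_nthRootsFinset_one {n : ℕ} {ζ : K} (hn : 0 < n) (hζ : IsPrimitiveRoot ζ n) :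
    Lagrange.nodal (nthRootsFinset n (1 : K)) id = X ^ n - 1 :=
  (X_pow_sub_one_eq_prod hn hζ).symm

lemma nodalWeight_nthRootsFinset_one [DecidableEq K] {n : ℕ} {ζ z : K}
    (hζ : IsPrimitiveRoot ζ n) (hz : z ∈ nthRootsFinset n (1 : K)) :
    Lagrange.nodalWeight (nthRootsFinset n (1 : K)) id z = z / n := by
  have hn : 0 < n := Nat.pos_of_ne_zero fun h0 ↦ by simp [h0] at hz
  have hz_pow : z ^ n = 1 := (mem_nthRootsFinset hn 1).1 hz
  have hz_inv : (z ^ (n - 1))⁻¹ = z :=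
    inv_eq_of_mul_eq_one_right (by rw [pow_sub_one_mul hn.ne', hz_pow])
  rw [Lagrange.nodalWeight_eq_eval_derivative_nodal hz, nodal_nthRootsFinset_one hn hζ]
  simp only [derivative_sub, derivative_X_pow, derivative_one, sub_zero, eval_mul, eval_pow, eval_X,
    eval_natCast, map_natCast, id, mul_inv_rev, hz_inv, div_eq_mul_inv]

theorem eval_div_one_sub_pow_eq_sum_nthRootsFinset {n : ℕ} {ζ q : K} (hζ : IsPrimitiveRoot ζ n)
    (hq : q ^ n ≠ 1) {P : K[X]} (hP : P.degree < n) :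
    P.eval q / (1 - q ^ n) =
      (1 / (n : K)) * ∑ z ∈ nthRootsFinset n (1 : K), P.eval z * (z / (z - q)) := by
  classical
  have hn : 0 < n := Nat.pos_of_ne_zero fun h0 ↦ hq (by rw [h0, pow_zero])
  have q_ne : ∀ z ∈ nthRootsFinset n (1 : K), q ≠ z := by
    rintro z hz rfl
    exact hq ((mem_nthRootsFinset hn 1).1 hz)
  have interpolation : P.eval q = (q ^ n - 1) *
      ∑ z ∈ nthRootsFinset n (1 : K), z / n * (q - z)⁻¹ * P.eval z := by
    conv_lhs => rw [Lagrange.eq_interpolate (f := P) (s := nthRootsFinset n (1 : K)) (v := id)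
      Function.injective_id.injOn (by rwa [hζ.card_nthRootsFinset])]
    rw [Lagrange.eval_interpolate_not_at_node (v := id) _ q_ne, nodal_nthRootsFinset_one hn hζ]
    simp only [eval_sub, eval_pow, eval_X, eval_one]
    congr 1
    refine Finset.sum_congr rfl fun z hz ↦ ?_
    rw [nodalWeight_nthRootsFinset_one hζ hz, id]
  rw [interpolation, div_eq_iff (sub_ne_zero.2 hq.symm), mul_comm, Finset.mul_sum, Finset.sum_mul,
    Finset.sum_mul]
  refine Finset.sum_congr rfl fun z _ ↦ ?_
  rw [← neg_sub z q, inv_neg]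
  ring

lemma sum_nthRootsFinset_div_sub {n : ℕ} {ζ q : K} (hζ : IsPrimitiveRoot ζ n) (hq : q ^ n ≠ 1) :
    ∑ z ∈ nthRootsFinset n (1 : K), z / (z - q) = n / (1 - q ^ n) := by
  have : NeZero n := ⟨fun h0 ↦ hq (by rw [h0, pow_zero])⟩
  have hn : (n : K) ≠ 0 := hζ.neZero'.out
  have hone := eval_div_one_sub_pow_eq_sum_nthRootsFinset hζ hq (P := 1)
    (by rw [degree_one]; exact_mod_cast NeZero.pos n)
  simp only [eval_one, one_mul] at hone
  rw [div_eq_mul_one_div, hone, one_div, mul_inv_cancel_left₀ hn]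

end PartialFractions

section RootsByOrder

lemma sum_nthRootsFinset_one_eq_sum_primitiveRoots {R M : Type*} [CommRing R] [IsDomain R]
    [AddCommMonoid M] (n : ℕ) (f : R → M) :
    ∑ z ∈ nthRootsFinset n (1 : R), f z = ∑ d ∈ n.divisors, ∑ z ∈ primitiveRoots d R, f z := by
  classical
  rw [IsPrimitiveRoot.nthRoots_one_eq_biUnion_primitiveRoots,
    Finset.sum_biUnion fun _ _ _ _ hij ↦ IsPrimitiveRoot.disjoint hij]

theorem sum_primitiveRoots_div_sub {K : Type*} [Field K] {d : ℕ} {ζ q : K}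
    (hζ : IsPrimitiveRoot ζ d) (hq : q ^ d ≠ 1) :
    ∑ z ∈ primitiveRoots d K, z / (z - q) =
      ∑ d' ∈ d.divisors, (d' : K) * (moebius (d / d') : K) / (1 - q ^ d') := by
  have hd : 0 < d := Nat.pos_of_ne_zero fun h0 ↦ hq (by rw [h0, pow_zero])
  have divisor_sum : ∀ n > 0, n ∈ {n | n ∣ d} →
      ∑ i ∈ n.divisors, ∑ z ∈ primitiveRoots i K, z / (z - q) = n / (1 - q ^ n) := by
    rintro n - ⟨m, rfl⟩
    have hqn : q ^ n ≠ 1 := fun h1 ↦ hq (by rw [pow_mul, h1, one_pow])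
    rw [← sum_nthRootsFinset_one_eq_sum_primitiveRoots]
    exact sum_nthRootsFinset_div_sub (hζ.pow hd (mul_comm n m)) hqn
  have inversion := (sum_eq_iff_sum_mul_moebius_eq_on {n | n ∣ d}
    fun _ _ hmn hn ↦ dvd_trans hmn hn).1 divisor_sum d hd dvd_rfl
  rw [← inversion, Nat.sum_divisorsAntidiagonal'
    (fun x y ↦ (moebius x : K) * ((y : K) / (1 - q ^ y)))]
  exact Finset.sum_congr rfl fun _ _ ↦ by ring

end RootsByOrder

section CohenFunctions

/-- `a` is an `h`-Cohen arithmetic function: its value at `k` depends only on `gcd(k, h)`. -/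
def IsCohenFunction {α : Type*} (h : ℕ) (a : ℕ → α) : Prop :=
  ∀ k, a k = a (k.gcd h)

lemma IsCohenFunction.periodic {α : Type*} {h : ℕ} {a : ℕ → α} (ha : IsCohenFunction h a) :
    Function.Periodic a h := fun k ↦ by
  rw [ha, Nat.gcd_add_self_left, ← ha]

lemma IsCohenFunction.map_coprime_mul {α : Type*} {h i : ℕ} {a : ℕ → α}
    (ha : IsCohenFunction h a) (hi : i.Coprime h) (k : ℕ) : a (i * k) = a k := by
  rw [ha, hi.gcd_mul_left_cancel, ← ha]

lemma sum_range_coprime_mul_of_periodic {M : Type*} [AddCommMonoid M] {f : ℕ → M} {h i : ℕ}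
    (hf : Function.Periodic f h) (hi : i.Coprime h) :
    ∑ k ∈ Finset.range h, f (i * k) = ∑ k ∈ Finset.range h, f k := by
  have maps : Set.MapsTo (fun k ↦ i * k % h) (Finset.range h) (Finset.range h) := fun k hk ↦ by
    have hk : k < h := Finset.mem_range.1 hk
    exact Finset.mem_coe.2 (Finset.mem_range.2 (Nat.mod_lt _ (by lia)))
  have inj : Set.InjOn (fun k ↦ i * k % h) (Finset.range h) := fun k hk l hl hkl ↦
    (Nat.ModEq.cancel_left_of_coprime hi.symm hkl).eq_of_lt_of_lt
      (Finset.mem_range.1 hk) (Finset.mem_range.1 hl)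
  exact Finset.sum_nbij (fun k ↦ i * k % h) maps inj
    (Finset.surjOn_of_injOn_of_card_le _ maps inj le_rfl) fun k _ ↦ (hf.map_mod_nat _).symm

lemma exists_coprime_modEq_of_dvd {d h i : ℕ} [NeZero h] (hd : d ∣ h) (hi : i.Coprime d) :
    ∃ j, j.Coprime h ∧ j ≡ i [MOD d] := by
  obtain ⟨u, hu⟩ := ZMod.unitsMap_surjective hd (ZMod.unitOfCoprime i hi)
  refine ⟨(u : ZMod h).val, ZMod.val_coe_unit_coprime u, ?_⟩
  rw [← ZMod.natCast_eq_natCast_iff, ZMod.natCast_val, ← ZMod.unitsMap_val hd, hu,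
    ZMod.coe_unitOfCoprime]

lemma IsCohenFunction.sum_mul_pow_pow {R : Type*} [CommSemiring R] {h i : ℕ} {a : ℕ → R}
    (ha : IsCohenFunction h a) (hi : i.Coprime h) {z : R} (hz : z ^ h = 1) :
    ∑ k ∈ Finset.range h, a k * (z ^ i) ^ k = ∑ k ∈ Finset.range h, a k * z ^ k := by
  have periodic : Function.Periodic (fun k ↦ a k * z ^ k) h := fun k ↦ by
    simp only [ha.periodic k, pow_add, hz, mul_one]
  rw [← sum_range_coprime_mul_of_periodic periodic hi]
  exact Finset.sum_congr rfl fun k _ ↦ by rw [ha.map_coprime_mul hi, pow_mul]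

theorem IsCohenFunction.sum_mul_pow_eq_of_isPrimitiveRoot {R : Type*} [CommRing R] [IsDomain R]
    {h d : ℕ} [NeZero h] {a : ℕ → R} (ha : IsCohenFunction h a) (hd : d ∣ h) {z w : R}
    (hz : IsPrimitiveRoot z d) (hw : IsPrimitiveRoot w d) :
    ∑ k ∈ Finset.range h, a k * z ^ k = ∑ k ∈ Finset.range h, a k * w ^ k := by
  have : NeZero d := ⟨ne_zero_of_dvd_ne_zero (NeZero.ne h) hd⟩
  obtain ⟨i, -, hi, rfl⟩ := hw.isPrimitiveRoot_iff.1 hz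
  obtain ⟨j, hj, hji⟩ := exists_coprime_modEq_of_dvd hd hi
  have pow_eq : w ^ i = w ^ j := pow_eq_pow_of_modEq hji.symm hw.pow_eq_one
  rw [pow_eq, ha.sum_mul_pow_pow hj ((hw.pow_eq_one_iff_dvd h).2 hd)]

end CohenFunctions

theorem stmt_5_general {K : Type*} [Field K] {h : ℕ} {ε q : K} (hε : IsPrimitiveRoot ε h)
    {a : ℕ → K} (ha : IsCohenFunction h a) (hq : q ^ h ≠ 1) :
    (∑ k ∈ Finset.range h, a k * q ^ k) / (1 - q ^ h) =
      (1 / (h : K)) * ∑ d ∈ h.divisors, (∑ k ∈ Finset.range h, a k * (ε ^ (h / d)) ^ k) *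
        ∑ d' ∈ d.divisors, (d' : K) * (moebius (d / d') : K) / (1 - q ^ d') := by
  have : NeZero h := ⟨fun h0 ↦ hq (by rw [h0, pow_zero])⟩
  have eval_A (z : K) : (PowerSeries.trunc h (.mk a)).eval z =
      ∑ k ∈ Finset.range h, a k * z ^ k := by
    rw [eval, PowerSeries.eval₂_trunc_eq_sum_range]
    simp only [PowerSeries.coeff_mk, RingHom.id_apply]
  rw [← eval_A, eval_div_one_sub_pow_eq_sum_nthRootsFinset hε hq (PowerSeries.degree_trunc_lt _ _),
    sum_nthRootsFinset_one_eq_sum_primitiveRoots]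
  congr 1
  refine Finset.sum_congr rfl fun d hd ↦ ?_
  obtain ⟨m, hm⟩ := Nat.dvd_of_mem_divisors hd
  have hζ : IsPrimitiveRoot (ε ^ (h / d)) d :=
    hε.pow (NeZero.pos h) (Nat.div_mul_cancel ⟨m, hm⟩).symm
  have hqd : q ^ d ≠ 1 := fun h1 ↦ hq (by rw [hm, pow_mul, h1, one_pow])
  rw [← sum_primitiveRoots_div_sub hζ hqd, Finset.mul_sum]
  refine Finset.sum_congr rfl fun z hz ↦ ?_
  have hz_prim : IsPrimitiveRoot z d := isPrimitiveRoot_of_mem_primitiveRoots hz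
  rw [eval_A, ha.sum_mul_pow_eq_of_isPrimitiveRoot ⟨m, hm⟩ hz_prim hζ]

/-- For an `h`-Cohen arithmetic function `a`, `A(q) := ∑_{k<h} a(k) q^k`,
`ε := exp(2πi/h)`, and any `q` with `q^h ≠ 1`:
`A(q)/(1 − q^h) = (1/h) ∑_{d ∣ h} A(ε^{h/d}) · ∑_{d′ ∣ d} d′ μ(d/d′)/(1 − q^{d′})`. -/
theorem stmt_5 (h : ℕ) (hh : 0 < h)
    (ε : ℂ) (hε : ε = Complex.exp (2 * Real.pi * Complex.I / h))
    (a : ℕ → ℂ) (ha : ∀ k : ℕ, a k = a (Nat.gcd k h))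
    (A : ℂ → ℂ) (hA : ∀ q : ℂ, A q = ∑ k ∈ Finset.range h, a k * q ^ k)
    (q : ℂ) (hq : q ^ h ≠ 1) :
    A q / (1 - q ^ h) =
      (1 / (h : ℂ)) * ∑ d ∈ h.divisors, A (ε ^ (h / d)) *
        ∑ d' ∈ d.divisors,
          (d' : ℂ) * ((ArithmeticFunction.moebius (d / d') : ℤ) : ℂ) /
            (1 - q ^ d') := by
  simp only [hA]
  exact stmt_5_general (hε ▸ Complex.isPrimitiveRoot_exp h hh.ne') ha hq
end

section
/- Let h be a positive integer and let a : ℕ → ℂ satisfy a(k) = a(gcd(k, h)) for every natural number k (with gcd(0, h) = h). Set A(q) := ∑_{k=0}^{h−1} a(k) q^k and Ψ_d(q) := ∑_{1 ≤ j ≤ d, gcd(j,d)=1} q^j. Then the polynomial identity A(q) − a(0)(1 − q^h) = ∑_{d | h} a(h/d) · Ψ_d(q^{h/d}) holds in ℂ[q]. -/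
open Polynomial

/-!
Since `a 0 = a h`, subtracting `a 0 * (1 - q ^ h)` moves the constant term of `A` to degree `h`,
so the left-hand side is the sum of `a k * q ^ k` over `1 ≤ k ≤ h`. Sort these `k` by
`d = h / gcd k h`: those belonging to `d` are the multiples `k = j * (h / d)` with `1 ≤ j ≤ d` and
`j` coprime to `d`, and on them `a` is constantly `a (h / d)`.
-/

theorem sum_range_sub_eq_sum_Icc {M : Type*} [AddCommGroup M] (f : ℕ → M) (n : ℕ) :
    ∑ k ∈ Finset.range n, f k - (f 0 - f n) = ∑ k ∈ Finset.Icc 1 n, f k := by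
  have split_zero : ∑ k ∈ Finset.range (n + 1), f k = f 0 + ∑ k ∈ Finset.Icc 1 n, f k := by
    rw [Finset.range_eq_Ico, Finset.sum_eq_sum_Ico_succ_bot n.succ_pos]
    rfl
  rw [← sub_eq_of_eq_add' split_zero, Finset.sum_range_succ]
  abel

theorem filter_gcd_eq_image_mul_right (d : ℕ) {e : ℕ} (he : 0 < e) :
    {k ∈ Finset.Icc 1 (d * e) | Nat.gcd k (d * e) = e} =
      {j ∈ Finset.Icc 1 d | Nat.gcd j d = 1}.image (· * e) := by
  ext k
  simp only [Finset.mem_filter, Finset.mem_Icc, Finset.mem_image]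
  constructor
  · rintro ⟨⟨hk_pos, hk_le⟩, hk_gcd⟩
    obtain ⟨j, rfl⟩ : e ∣ k := hk_gcd ▸ Nat.gcd_dvd_left k (d * e)
    rw [mul_comm e j] at hk_pos hk_le hk_gcd ⊢
    rw [Nat.gcd_mul_right] at hk_gcd
    exact ⟨j, ⟨⟨Nat.pos_of_mul_pos_right hk_pos, Nat.le_of_mul_le_mul_right hk_le he⟩,
      Nat.eq_of_mul_eq_mul_right he (hk_gcd.trans (one_mul e).symm)⟩, rfl⟩
  · rintro ⟨j, ⟨⟨hj_pos, hj_le⟩, hj_gcd⟩, rfl⟩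
    exact ⟨⟨Nat.mul_pos hj_pos he, Nat.mul_le_mul_right e hj_le⟩,
      by rw [Nat.gcd_mul_right, hj_gcd, one_mul]⟩

section SumByGcd

variable {M : Type*} [AddCommMonoid M]

theorem sum_filter_gcd_eq_sum_coprime (f : ℕ → M) (d : ℕ) {e : ℕ} (he : 0 < e) :
    ∑ k ∈ Finset.Icc 1 (d * e) with Nat.gcd k (d * e) = e, f k =
      ∑ j ∈ Finset.Icc 1 d with Nat.gcd j d = 1, f (j * e) := by
  rw [filter_gcd_eq_image_mul_right d he,
    Finset.sum_image (mul_left_injective₀ he.ne').injOn]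

theorem sum_Icc_eq_sum_divisors_sum_coprime (f : ℕ → M) {n : ℕ} (hn : 0 < n) :
    ∑ k ∈ Finset.Icc 1 n, f k =
      ∑ d ∈ n.divisors, ∑ j ∈ Finset.Icc 1 d with Nat.gcd j d = 1, f (j * (n / d)) := by
  have gcd_mem_divisors : ∀ k ∈ Finset.Icc 1 n, Nat.gcd k n ∈ n.divisors := fun k _ =>
    Nat.mem_divisors.2 ⟨Nat.gcd_dvd_right k n, hn.ne'⟩
  rw [← Finset.sum_fiberwise_of_maps_to gcd_mem_divisors, ← Nat.sum_div_divisors]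
  refine Finset.sum_congr rfl fun d hd => ?_
  have quotient_pos : 0 < n / d := Nat.div_pos (Nat.divisor_le hd) (Nat.pos_of_mem_divisors hd)
  simpa only [Nat.mul_div_cancel' (Nat.dvd_of_mem_divisors hd)] using
    sum_filter_gcd_eq_sum_coprime f d quotient_pos

end SumByGcd

theorem apply_mul_div_of_gcd_eq_one {α : Type*} {h : ℕ} {a : ℕ → α}
    (ha : ∀ k : ℕ, a k = a (Nat.gcd k h)) {d j : ℕ} (hd : d ∣ h) (hj : Nat.gcd j d = 1) :
    a (j * (h / d)) = a (h / d) := by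
  have gcd_eq : Nat.gcd (j * (h / d)) h = h / d := by
    nth_rw 2 [← Nat.mul_div_cancel' hd]
    rw [Nat.gcd_mul_right, hj, one_mul]
  rw [ha, gcd_eq]

theorem stmt_7_general {R : Type*} [Ring R] (h : ℕ) (hh : 0 < h)
    (a : ℕ → R) (ha : ∀ k : ℕ, a k = a (Nat.gcd k h)) :
    (∑ k ∈ Finset.range h, C (a k) * X ^ k) - C (a 0) * (1 - X ^ h) =
      ∑ d ∈ h.divisors, C (a (h / d)) *
        ∑ j ∈ (Finset.Icc 1 d).filter (fun j => Nat.gcd j d = 1),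
          (X : Polynomial R) ^ (j * (h / d)) := by
  have apply_zero : a 0 = a h := by rw [ha 0, Nat.gcd_zero_left]
  have boundary : C (a 0) * (1 - X ^ h) = C (a 0) * X ^ 0 - C (a h) * X ^ h := by
    rw [mul_sub, apply_zero, pow_zero]
  rw [boundary, sum_range_sub_eq_sum_Icc (fun k => C (a k) * X ^ k),
    sum_Icc_eq_sum_divisors_sum_coprime _ hh]
  refine Finset.sum_congr rfl fun d hd => ?_
  rw [Finset.mul_sum]
  refine Finset.sum_congr rfl fun j hj => ?_
  rw [apply_mul_div_of_gcd_eq_one ha (Nat.dvd_of_mem_divisors hd) (Finset.mem_filter.1 hj).2]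

/-- For an `h`-Cohen arithmetic function `a`, with
`A(q) := ∑_{k<h} a(k) q^k` and `Ψ_d(q) := ∑_{1 ≤ j ≤ d, gcd(j,d)=1} q^j`, the identity
`A(q) − a(0)(1 − q^h) = ∑_{d ∣ h} a(h/d) Ψ_d(q^{h/d})` holds in `ℂ[q]`. -/
theorem stmt_7 (h : ℕ) (hh : 0 < h)
    (a : ℕ → ℂ) (ha : ∀ k : ℕ, a k = a (Nat.gcd k h)) :
    (∑ k ∈ Finset.range h, C (a k) * X ^ k) - C (a 0) * (1 - X ^ h) =
      ∑ d ∈ h.divisors, C (a (h / d)) *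
        ∑ j ∈ (Finset.Icc 1 d).filter (fun j => Nat.gcd j d = 1),
          (X : Polynomial ℂ) ^ (j * (h / d)) :=
  stmt_7_general h hh a ha
end

section
/- Let h be a positive integer and let a : ℕ → ℂ satisfy a(k) = a(gcd(k, h)) for every natural number k (with gcd(0, h) = h). Set A(q) := ∑_{k=0}^{h−1} a(k) q^k. Then for every q ∈ ℂ with q^h ≠ 1: A(q)/(1 − q^h) = ∑_{d | h} a(h/d) · ∑_{d′ | d} μ(d′) / (1 − q^{h d′/d}), where μ is the Möbius function. -/
/-!
Collecting the terms of `∑ k < h, a k * q ^ k` according to `gcd k h = h / d` reduces the identity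
to a single divisor `e = h / d` of `h = e * d`. Möbius inversion writes the indicator of
`gcd k (e * d) = e` as the sum of `μ x` over the divisors `x` of `d` with `e * x ∣ k`, and summing
`q ^ k` over the multiples `k < h` of `e * x` is a geometric progression, equal to
`(1 - q ^ h) / (1 - q ^ (e * x))`.
-/

open ArithmeticFunction Finset

theorem divisors_filter_dvd {n : ℕ} (hn : n ≠ 0) (j : ℕ) :
    {x ∈ n.divisors | x ∣ j} = (j.gcd n).divisors := by
  rw [← Nat.divisors_filter_dvd_of_dvd hn (Nat.gcd_dvd_right j n)]
  refine filter_congr fun x hx ↦ ?_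
  rw [Nat.dvd_gcd_iff, and_iff_left (Nat.dvd_of_mem_divisors hx)]

theorem sum_moebius_divisors (n : ℕ) :
    ∑ x ∈ n.divisors, moebius x = if n = 1 then 1 else 0 := by
  rw [← coe_mul_zeta_apply, moebius_mul_coe_zeta, one_apply]

theorem sum_moebius_filter_mul_dvd {d e : ℕ} (hd : d ≠ 0) (he : e ≠ 0) (k : ℕ) :
    ∑ x ∈ d.divisors with e * x ∣ k, moebius x = if k.gcd (e * d) = e then 1 else 0 := by
  by_cases hek : e ∣ k
  · obtain ⟨j, rfl⟩ := hek
    simp only [Nat.mul_dvd_mul_iff_left (Nat.pos_of_ne_zero he), divisors_filter_dvd hd,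
      sum_moebius_divisors, Nat.gcd_mul_left, Nat.mul_eq_left he]
  · have no_multiple : ∀ x ∈ d.divisors, ¬ e * x ∣ k := fun x _ hx ↦
      hek (dvd_of_mul_right_dvd hx)
    have gcd_ne : k.gcd (e * d) ≠ e := fun hgcd ↦ hek (hgcd ▸ Nat.gcd_dvd_left k (e * d))
    rw [filter_false_of_mem no_multiple, sum_empty, if_neg gcd_ne]

theorem sum_range_mul_filter_dvd {M : Type*} [AddCommMonoid M] {m : ℕ} (hm : m ≠ 0) (n : ℕ)
    (f : ℕ → M) :
    ∑ k ∈ range (m * n) with m ∣ k, f k = ∑ j ∈ range n, f (m * j) := by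
  have multiples_eq : {k ∈ range (m * n) | m ∣ k} = (range n).image (m * ·) := by
    ext k
    simp only [mem_filter, mem_range, mem_image]
    constructor
    · rintro ⟨hk, j, rfl⟩
      exact ⟨j, Nat.lt_of_mul_lt_mul_left hk, rfl⟩
    · rintro ⟨j, hj, rfl⟩
      exact ⟨Nat.mul_lt_mul_of_pos_left hj (Nat.pos_of_ne_zero hm), dvd_mul_right m j⟩
  rw [multiples_eq, sum_image fun _ _ _ _ h ↦ Nat.mul_left_cancel (Nat.pos_of_ne_zero hm) h]

theorem sum_divisors_sum_filter_gcd_eq_div {M : Type*} [AddCommMonoid M] {h : ℕ} (hh : h ≠ 0)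
    (s : Finset ℕ) (f : ℕ → M) :
    ∑ d ∈ h.divisors, ∑ k ∈ s with k.gcd h = h / d, f k = ∑ k ∈ s, f k := by
  rw [Nat.sum_div_divisors h fun e ↦ ∑ k ∈ s with k.gcd h = e, f k]
  exact sum_fiberwise_of_maps_to
    (fun k _ ↦ Nat.mem_divisors.2 ⟨Nat.gcd_dvd_right k h, hh⟩) f

section DivisionRing

variable {K : Type*} [DivisionRing K] {q : K}

theorem sum_range_filter_dvd_pow_div_one_sub_pow {m N : ℕ} (hmN : m ∣ N) (hq : q ^ N ≠ 1) :
    (∑ k ∈ range N with m ∣ k, q ^ k) / (1 - q ^ N) = (1 - q ^ m)⁻¹ := by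
  obtain ⟨n, rfl⟩ := hmN
  have hm : m ≠ 0 := by
    rintro rfl
    simp at hq
  have hqm : q ^ m ≠ 1 := fun hqm ↦ hq (by rw [pow_mul, hqm, one_pow])
  rw [div_eq_iff (sub_ne_zero.2 hq.symm), eq_inv_mul_iff_mul_eq₀ (sub_ne_zero.2 hqm.symm),
    sum_range_mul_filter_dvd hm]
  simp only [pow_mul, mul_neg_geom_sum]

theorem sum_moebius_div_one_sub_pow {d e : ℕ} (hq : q ^ (e * d) ≠ 1) :
    ∑ x ∈ d.divisors, (moebius x : K) / (1 - q ^ (e * x)) =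
      (∑ k ∈ range (e * d) with k.gcd (e * d) = e, q ^ k) / (1 - q ^ (e * d)) := by
  have hed : e * d ≠ 0 := fun hed ↦ hq (by rw [hed, pow_zero])
  obtain ⟨he, hd⟩ := mul_ne_zero_iff.1 hed
  calc ∑ x ∈ d.divisors, (moebius x : K) / (1 - q ^ (e * x))
    _ = ∑ x ∈ d.divisors,
          (∑ k ∈ range (e * d) with e * x ∣ k, (moebius x : K) * q ^ k) / (1 - q ^ (e * d)) := by
      refine sum_congr rfl fun x hx ↦ ?_
      rw [div_eq_mul_inv, ← sum_range_filter_dvd_pow_div_one_sub_pow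
        (Nat.mul_dvd_mul_left e (Nat.dvd_of_mem_divisors hx)) hq, ← mul_div_assoc, mul_sum]
    _ = (∑ k ∈ range (e * d), ((∑ x ∈ d.divisors with e * x ∣ k, moebius x : ℤ) : K) * q ^ k) /
          (1 - q ^ (e * d)) := by
      simp only [← sum_div, Int.cast_sum, sum_mul]
      simp only [sum_filter]
      rw [sum_comm]
    _ = (∑ k ∈ range (e * d) with k.gcd (e * d) = e, q ^ k) / (1 - q ^ (e * d)) := by
      simp only [sum_moebius_filter_mul_dvd hd he, sum_filter, Int.cast_ite, Int.cast_one,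
        Int.cast_zero, ite_mul, one_mul, zero_mul]

theorem stmt_8_general {h : ℕ} {a : ℕ → K} (ha : ∀ k, a k = a (k.gcd h)) (hq : q ^ h ≠ 1) :
    (∑ k ∈ range h, a k * q ^ k) / (1 - q ^ h) =
      ∑ d ∈ h.divisors, a (h / d) *
        ∑ d' ∈ d.divisors, (moebius d' : K) / (1 - q ^ (h * d' / d)) := by
  have hh : h ≠ 0 := fun hh ↦ hq (by rw [hh, pow_zero])
  rw [← sum_divisors_sum_filter_gcd_eq_div hh, sum_div]
  refine sum_congr rfl fun d hd ↦ ?_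
  obtain ⟨e, rfl⟩ := Nat.dvd_of_mem_divisors hd
  have hd0 : 0 < d := Nat.pos_of_mem_divisors hd
  have exponent_eq (x : ℕ) : d * e * x / d = e * x := by
    rw [mul_assoc, Nat.mul_div_cancel_left _ hd0]
  have a_eq : ∀ k ∈ {k ∈ range (d * e) | k.gcd (d * e) = e}, a k * q ^ k = a e * q ^ k := by
    intro k hk
    rw [ha k, (mem_filter.1 hk).2]
  simp only [exponent_eq, Nat.mul_div_cancel_left e hd0]
  rw [sum_congr rfl a_eq, ← mul_sum, mul_div_assoc, mul_comm d e,
    sum_moebius_div_one_sub_pow (mul_comm d e ▸ hq)]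

end DivisionRing

/-- For an `h`-Cohen arithmetic function `a`, `A(q) := ∑_{k<h} a(k) q^k`,
and any `q` with `q^h ≠ 1`:
`A(q)/(1 − q^h) = ∑_{d ∣ h} a(h/d) · ∑_{d′ ∣ d} μ(d′)/(1 − q^{h d′/d})`. -/
theorem stmt_8 (h : ℕ) (hh : 0 < h)
    (a : ℕ → ℂ) (ha : ∀ k : ℕ, a k = a (Nat.gcd k h))
    (A : ℂ → ℂ) (hA : ∀ q : ℂ, A q = ∑ k ∈ Finset.range h, a k * q ^ k)
    (q : ℂ) (hq : q ^ h ≠ 1) :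
    A q / (1 - q ^ h) =
      ∑ d ∈ h.divisors, a (h / d) *
        ∑ d' ∈ d.divisors,
          ((ArithmeticFunction.moebius d' : ℤ) : ℂ) / (1 - q ^ (h * d' / d)) := by
  rw [hA, stmt_8_general ha hq]
end

section
/- Let h be a positive integer and e : ℕ → ℤ a function vanishing off the divisors of h. Write e⁺(d) := max(e(d), 0) and e⁻(d) := max(−e(d), 0). Suppose P ∈ ℂ[X] is a nonzero polynomial satisfying P(X) · ∏_{d | h} (X^d − 1)^{e⁻(d)} = ∏_{d | h} (X^d − 1)^{e⁺(d)}. Then for every natural number k, the multiplicity of exp(2πik/h) as a root of P equals ∑_{d | gcd(k, h)} e(h/d) (with gcd(0, h) = h). -/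
open Polynomial

/-!
Root multiplicity at `z` turns the factorisation into an additive identity, and `X ^ d - 1` has
no repeated roots, so `d` contributes `e d` if `z ^ d = 1` and `0` otherwise. For `z = ζ ^ k` with
`ζ` a primitive `h`-th root of unity, replace `d` by the complementary divisor:
`z ^ (h / d) = 1` iff `d ∣ k`.
-/

section RootMultiplicity

variable {R : Type*} [CommRing R] [IsDomain R]

lemma rootMultiplicity_X_pow_sub_C [DecidableEq R] {n : ℕ} (hn : (n : R) ≠ 0) {a : R}
    (ha : a ≠ 0) (z : R) :
    (X ^ n - C a : R[X]).rootMultiplicity z = if z ^ n = a then 1 else 0 := by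
  have hn0 : n ≠ 0 := by rintro rfl; simp at hn
  have hne : (X ^ n - C a : R[X]) ≠ 0 := X_pow_sub_C_ne_zero (Nat.pos_of_ne_zero hn0) a
  have isRoot_iff : (X ^ n - C a : R[X]).IsRoot z ↔ z ^ n = a := by simp [sub_eq_zero]
  split_ifs with hz
  · have hz0 : z ≠ 0 := by
      rintro rfl
      exact ha (by rw [← hz, zero_pow hn0])
    have derivative_not_isRoot : ¬ (derivative (X ^ n - C a : R[X])).IsRoot z := by
      simp [derivative_X_pow, hn, hz0]
    have le_one : (X ^ n - C a : R[X]).rootMultiplicity z ≤ 1 := by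
      rw [← not_lt, one_lt_rootMultiplicity_iff_isRoot hne]
      exact fun hroots => derivative_not_isRoot hroots.2
    exact le_antisymm le_one ((rootMultiplicity_pos hne).2 (isRoot_iff.2 hz))
  · exact rootMultiplicity_eq_zero (mt isRoot_iff.1 hz)

lemma rootMultiplicity_prod_pow {ι : Type*} {s : Finset ι} {f : ι → R[X]}
    (hf : ∀ i ∈ s, f i ≠ 0) (m : ι → ℕ) (z : R) :
    (∏ i ∈ s, f i ^ m i).rootMultiplicity z = ∑ i ∈ s, m i * (f i).rootMultiplicity z := by
  classical
  have hne : ∏ i ∈ s, f i ^ m i ≠ 0 :=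
    Finset.prod_ne_zero_iff.2 fun i hi => pow_ne_zero _ (hf i hi)
  rw [← count_roots, roots_prod _ _ hne, Multiset.count_bind]
  simp only [roots_pow, Multiset.count_nsmul, count_roots, Finset.sum_map_val]

lemma rootMultiplicity_eq_sum_of_mul_prod_pow_eq {ι : Type*} {s : Finset ι} {f : ι → R[X]}
    (hf : ∀ i ∈ s, f i ≠ 0) {e : ι → ℤ} {P : R[X]}
    (hP : P * ∏ i ∈ s, f i ^ (-e i).toNat = ∏ i ∈ s, f i ^ (e i).toNat) (z : R) :
    (P.rootMultiplicity z : ℤ) = ∑ i ∈ s, e i * (f i).rootMultiplicity z := by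
  have hne : P * ∏ i ∈ s, f i ^ (-e i).toNat ≠ 0 :=
    hP ▸ Finset.prod_ne_zero_iff.2 fun i hi => pow_ne_zero _ (hf i hi)
  have hmult : P.rootMultiplicity z + ∑ i ∈ s, (-e i).toNat * (f i).rootMultiplicity z =
      ∑ i ∈ s, (e i).toNat * (f i).rootMultiplicity z := by
    rw [← rootMultiplicity_prod_pow hf, ← rootMultiplicity_prod_pow hf,
      ← rootMultiplicity_mul hne, hP]
  calc (P.rootMultiplicity z : ℤ)
      = ∑ i ∈ s, ((e i).toNat : ℤ) * (f i).rootMultiplicity z -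
          ∑ i ∈ s, ((-e i).toNat : ℤ) * (f i).rootMultiplicity z :=
        eq_sub_of_add_eq (mod_cast hmult)
    _ = ∑ i ∈ s, e i * (f i).rootMultiplicity z := by
        simp only [← Finset.sum_sub_distrib, ← sub_mul, Int.toNat_sub_toNat_neg]

lemma rootMultiplicity_eq_sum_filter_pow_eq_one [DecidableEq R] {s : Finset ℕ}
    (hs : ∀ d ∈ s, (d : R) ≠ 0) {e : ℕ → ℤ} {P : R[X]}
    (hP : P * ∏ d ∈ s, (X ^ d - 1) ^ (-e d).toNat = ∏ d ∈ s, (X ^ d - 1) ^ (e d).toNat) (z : R) :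
    (P.rootMultiplicity z : ℤ) = ∑ d ∈ s with z ^ d = 1, e d := by
  have hne : ∀ d ∈ s, (X ^ d - 1 : R[X]) ≠ 0 := fun d hd =>
    X_pow_sub_C_ne_zero (Nat.pos_of_ne_zero fun hd0 => hs d hd (by simp [hd0])) 1
  rw [rootMultiplicity_eq_sum_of_mul_prod_pow_eq hne hP, Finset.sum_filter]
  refine Finset.sum_congr rfl fun d hd => ?_
  rw [← C_1, rootMultiplicity_X_pow_sub_C (hs d hd) one_ne_zero]
  simp

end RootMultiplicity

section PrimitiveRoot

variable {M : Type*} [CommMonoid M] {ζ : M} {h : ℕ}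

lemma pow_pow_div_eq_one_iff_dvd (hζ : IsPrimitiveRoot ζ h) (hh : h ≠ 0) {d : ℕ} (hd : d ∣ h)
    (k : ℕ) : (ζ ^ k) ^ (h / d) = 1 ↔ d ∣ k := by
  obtain ⟨c, rfl⟩ := hd
  obtain ⟨hd0, hc0⟩ := mul_ne_zero_iff.1 hh
  rw [← pow_mul, hζ.pow_eq_one_iff_dvd, Nat.mul_div_cancel_left c (Nat.pos_of_ne_zero hd0),
    Nat.mul_dvd_mul_iff_right (Nat.pos_of_ne_zero hc0)]

lemma sum_divisors_filter_pow_eq_one [DecidableEq M] {A : Type*} [AddCommMonoid A]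
    (hζ : IsPrimitiveRoot ζ h) (hh : h ≠ 0) (k : ℕ) (f : ℕ → A) :
    ∑ d ∈ h.divisors with (ζ ^ k) ^ d = 1, f d = ∑ d ∈ (k.gcd h).divisors, f (h / d) := by
  have divisors_gcd : (k.gcd h).divisors = {d ∈ h.divisors | d ∣ k} := by
    ext d
    simp [Nat.dvd_gcd_iff, hh, and_comm]
  rw [divisors_gcd, Finset.sum_filter, Finset.sum_filter, ← Nat.sum_div_divisors]
  refine Finset.sum_congr rfl fun d hd => ?_
  simp only [pow_pow_div_eq_one_iff_dvd hζ hh (Nat.dvd_of_mem_divisors hd)]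

end PrimitiveRoot

theorem stmt_9_general {R : Type*} [CommRing R] [IsDomain R] {ζ : R} {h : ℕ}
    (hζ : IsPrimitiveRoot ζ h) (hh : h ≠ 0) {e : ℕ → ℤ} {P : R[X]}
    (hP : P * ∏ d ∈ h.divisors, (X ^ d - 1) ^ (-e d).toNat =
      ∏ d ∈ h.divisors, (X ^ d - 1) ^ (e d).toNat) (k : ℕ) :
    (P.rootMultiplicity (ζ ^ k) : ℤ) = ∑ d ∈ (k.gcd h).divisors, e (h / d) := by
  classical
  have : NeZero h := ⟨hh⟩
  have cast_h_ne_zero : (h : R) ≠ 0 := hζ.neZero'.out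
  have cast_ne_zero : ∀ d ∈ h.divisors, (d : R) ≠ 0 := fun d hd =>
    ne_zero_of_dvd_ne_zero cast_h_ne_zero (Nat.cast_dvd_cast (Nat.dvd_of_mem_divisors hd))
  rw [rootMultiplicity_eq_sum_filter_pow_eq_one cast_ne_zero hP,
    sum_divisors_filter_pow_eq_one hζ hh]

lemma exp_two_pi_mul_I_mul_div_eq_pow (k h : ℕ) :
    Complex.exp (2 * Real.pi * Complex.I * k / h) =
      Complex.exp (2 * Real.pi * Complex.I / h) ^ k := by
  rw [← Complex.exp_nat_mul]
  ring_nf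

/-- Let `e : ℕ → ℤ` vanish off the divisors of `h` and write
`e⁺(d) = max(e(d),0)`, `e⁻(d) = max(−e(d),0)`. If a nonzero `P ∈ ℂ[X]` satisfies
`P · ∏_{d ∣ h} (X^d − 1)^{e⁻(d)} = ∏_{d ∣ h} (X^d − 1)^{e⁺(d)}`
(i.e. `P = ∏_{d ∣ h} (X^d − 1)^{e(d)}` as a rational function), then for every `k`,
the multiplicity of `exp(2πik/h)` as a root of `P` equals `∑_{d ∣ gcd(k,h)} e(h/d)`. -/
theorem stmt_9 (h : ℕ) (hh : 0 < h) (e : ℕ → ℤ)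
    (he : ∀ d : ℕ, d ∉ h.divisors → e d = 0)
    (P : Polynomial ℂ) (hP : P ≠ 0)
    (hfac : P * ∏ d ∈ h.divisors, ((X : Polynomial ℂ) ^ d - 1) ^ (-e d).toNat =
      ∏ d ∈ h.divisors, ((X : Polynomial ℂ) ^ d - 1) ^ (e d).toNat) :
    ∀ k : ℕ,
      (P.rootMultiplicity (Complex.exp (2 * Real.pi * Complex.I * k / h)) : ℤ) =
        ∑ d ∈ (Nat.gcd k h).divisors, e (h / d) := by
  intro k
  rw [exp_two_pi_mul_I_mul_div_eq_pow]
  exact stmt_9_general (Complex.isPrimitiveRoot_exp h hh.ne') hh.ne' hfac k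
end

section
/- Let h ≥ 2 be an integer and ε := exp(2πi/h) ∈ ℂ. Let m : ℕ → ℕ satisfy m(k) = m(gcd(k, h)) for every k ≥ 1 together with m(h) = 0 and m(0) = 0. Set n := ∑_{k=1}^{h−1} m(k), E(q) := ∑_{k=1}^{h−1} m(k) q^k, and p(j) := ∑_{k=1}^{h−1} m(k) ε^{kj} (so p(j) = E(ε^j) and p(0) = n). Then for every q ∈ ℂ with q^h ≠ 1: (n − E(q))/(1 − q^h) = (1/h) ∑_{k=1}^{h−1} ε^k (n − p(k)) / (ε^k − q). -/
/-!
A polynomial `f` of degree less than `h` is its own Lagrange interpolant at the `h`-th roots of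
unity. The nodal polynomial is `X ^ h - 1`, so the barycentric weight at a root `ζ` is
`1 / (h * ζ ^ (h - 1)) = ζ / h`, and the barycentric formula becomes the partial fraction expansion
`f(q) / (1 - q ^ h) = (1 / h) * ∑ ζ, ζ * f(ζ) / (ζ - q)`. For `f = E(1) - E`, the term at `ζ = 1`
vanishes.
-/

open Polynomial Finset

theorem pos_of_pow_ne_one {M : Type*} [Monoid M] {a : M} {n : ℕ} (ha : a ^ n ≠ 1) : 0 < n :=
  Nat.pos_of_ne_zero fun hn ↦ ha (by rw [hn, pow_zero])

theorem nodal_range_pow_eq_X_pow_sub_one {R : Type*} [CommRing R] [IsDomain R] {h : ℕ} {ε : R}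
    (hε : IsPrimitiveRoot ε h) (hpos : 0 < h) :
    Lagrange.nodal (range h) (ε ^ ·) = X ^ h - 1 := by
  simpa [Lagrange.nodal_eq] using (X_pow_sub_C_eq_prod hε hpos (one_pow h)).symm

section Field

variable {K : Type*} [Field K] {h : ℕ} {ε q : K}

theorem nodalWeight_range_pow (hε : IsPrimitiveRoot ε h) {k : ℕ} (hk : k < h) :
    Lagrange.nodalWeight (range h) (ε ^ ·) k = ε ^ k / h := by
  have hpos : 0 < h := k.zero_le.trans_lt hk
  have hroot : ε ^ k * (ε ^ k) ^ (h - 1) = 1 := by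
    rw [mul_pow_sub_one hpos.ne', pow_right_comm, hε.pow_eq_one, one_pow]
  rw [Lagrange.nodalWeight_eq_eval_derivative_nodal (mem_range.mpr hk),
    nodal_range_pow_eq_X_pow_sub_one hε hpos, derivative_sub, derivative_X_pow, derivative_one,
    sub_zero, eval_mul, eval_C, eval_pow, eval_X, mul_inv, ← eq_inv_of_mul_eq_one_left hroot,
    div_eq_inv_mul]

theorem eval_div_one_sub_pow_eq_sum (hε : IsPrimitiveRoot ε h) {f : K[X]} (hf : f.degree < h)
    (hq : q ^ h ≠ 1) :
    f.eval q / (1 - q ^ h) =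
      (1 / (h : K)) * ∑ k ∈ range h, ε ^ k * f.eval (ε ^ k) / (ε ^ k - q) := by
  have hpos : 0 < h := pos_of_pow_ne_one hq
  have hnode : ∀ k ∈ range h, q ≠ ε ^ k := by
    rintro k - rfl
    exact hq (by rw [pow_right_comm, hε.pow_eq_one, one_pow])
  have hweight : ∀ k ∈ range h,
      Lagrange.nodalWeight (range h) (ε ^ ·) k * (q - ε ^ k)⁻¹ * f.eval (ε ^ k) =
        -(1 / h * (ε ^ k * f.eval (ε ^ k) / (ε ^ k - q))) := by
    intro k hk
    rw [nodalWeight_range_pow hε (mem_range.mp hk), ← neg_sub (ε ^ k) q, inv_neg]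
    ring
  have hbary : f.eval q = (q ^ h - 1) *
      ∑ k ∈ range h, Lagrange.nodalWeight (range h) (ε ^ ·) k * (q - ε ^ k)⁻¹ * f.eval (ε ^ k) := by
    conv_lhs => rw [Lagrange.eq_interpolate (f := f) hε.injOn_pow (by rwa [card_range])]
    rw [Lagrange.eval_interpolate_not_at_node _ hnode, nodal_range_pow_eq_X_pow_sub_one hε hpos,
      eval_sub, eval_pow, eval_X, eval_one]
  rw [div_eq_iff (sub_ne_zero.mpr hq.symm), hbary, sum_congr rfl hweight, sum_neg_distrib,
    ← mul_sum]
  ring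

theorem eval_one_sub_eval_div_one_sub_pow_eq_sum (hε : IsPrimitiveRoot ε h) {f : K[X]}
    (hf : f.degree < h) (hq : q ^ h ≠ 1) :
    (f.eval 1 - f.eval q) / (1 - q ^ h) =
      (1 / (h : K)) * ∑ k ∈ Icc 1 (h - 1),
        ε ^ k * (f.eval 1 - f.eval (ε ^ k)) / (ε ^ k - q) := by
  have hpos : 0 < h := pos_of_pow_ne_one hq
  have hdeg : (C (f.eval 1) - f).degree < h :=
    (degree_sub_le _ _).trans_lt (max_lt (degree_C_le.trans_lt (by exact_mod_cast hpos)) hf)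
  have hexpand := eval_div_one_sub_pow_eq_sum hε hdeg hq
  simp only [eval_sub, eval_C] at hexpand
  rw [hexpand, range_eq_Ico, sum_eq_sum_Ico_succ_bot hpos, pow_zero, sub_self, mul_zero, zero_div,
    zero_add, zero_add, Icc_sub_one_right_eq_Ico_of_not_isMin (not_isMin_of_lt hpos)]

theorem stmt_11_general (hε : IsPrimitiveRoot ε h) (m : ℕ → K) (hq : q ^ h ≠ 1) :
    ((∑ j ∈ Icc 1 (h - 1), m j) - ∑ j ∈ Icc 1 (h - 1), m j * q ^ j) / (1 - q ^ h) =
      (1 / (h : K)) * ∑ k ∈ Icc 1 (h - 1),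
        ε ^ k * ((∑ j ∈ Icc 1 (h - 1), m j) - ∑ j ∈ Icc 1 (h - 1), m j * ε ^ (j * k)) /
          (ε ^ k - q) := by
  have hpos : 0 < h := pos_of_pow_ne_one hq
  have hdeg : (∑ j ∈ Icc 1 (h - 1), C (m j) * X ^ j : K[X]).degree < h := by
    refine (degree_sum_le _ _).trans_lt ((Finset.sup_lt_iff (WithBot.bot_lt_coe h)).mpr ?_)
    intro j hj
    refine (degree_C_mul_X_pow_le j (m j)).trans_lt (Nat.cast_lt.mpr ?_)
    have := mem_Icc.mp hj
    lia
  simpa only [eval_finsetSum, eval_mul, eval_C, eval_pow, eval_X, one_pow, mul_one, pow_mul'] using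
    eval_one_sub_eval_div_one_sub_pow_eq_sum hε hdeg hq

end Field

/-- Let `h ≥ 2`, `ε := exp(2πi/h)`, and let `m : ℕ → ℕ` be an
`h`-Cohen function with `m(0) = m(h) = 0`. With `n := ∑_{k=1}^{h−1} m(k)`,
`E(q) := ∑_{k=1}^{h−1} m(k) q^k` and `p(j) := ∑_{k=1}^{h−1} m(k) ε^{kj}`, for every
`q` with `q^h ≠ 1`:
`(n − E(q))/(1 − q^h) = (1/h) ∑_{k=1}^{h−1} ε^k (n − p(k))/(ε^k − q)`. -/
theorem stmt_11 (h : ℕ) (hh : 2 ≤ h)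
    (ε : ℂ) (hε : ε = Complex.exp (2 * Real.pi * Complex.I / h))
    (m : ℕ → ℕ) (hm : ∀ k : ℕ, 1 ≤ k → m k = m (Nat.gcd k h))
    (hmh : m h = 0) (hm0 : m 0 = 0)
    (n : ℕ) (hn : n = ∑ k ∈ Finset.Icc 1 (h - 1), m k)
    (E : ℂ → ℂ) (hE : ∀ q : ℂ, E q = ∑ k ∈ Finset.Icc 1 (h - 1), (m k : ℂ) * q ^ k)
    (p : ℕ → ℂ) (hp : ∀ j : ℕ, p j = ∑ k ∈ Finset.Icc 1 (h - 1), (m k : ℂ) * ε ^ (k * j))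
    (q : ℂ) (hq : q ^ h ≠ 1) :
    ((n : ℂ) - E q) / (1 - q ^ h) =
      (1 / (h : ℂ)) * ∑ k ∈ Finset.Icc 1 (h - 1),
        ε ^ k * ((n : ℂ) - p k) / (ε ^ k - q) := by
  simpa [hn, hE, hp] using
    stmt_11_general (hε ▸ Complex.isPrimitiveRoot_exp h (by lia)) (fun k ↦ (m k : ℂ)) hq
end

section
/- Let h be a positive integer and let a : ℕ → ℂ be h-periodic (a(k + h) = a(k) for all k). Then the following are equivalent: (i) a(k) = a(gcd(k, h)) for every k ≥ 1; (ii) there exists a function l : ℕ → ℂ such that the polynomial identity ∑_{k=0}^{h−1} a(k) q^k = ∑_{d | h} l(d) · ∑_{j=0}^{h/d − 1} q^{jd} holds in ℂ[q]. -/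
open Polynomial

/-!
Grouping the right-hand side of (ii) by powers of `q`, the coefficient of `q ^ k` collects `l d`
over the `d` dividing both `k` and `h`, so (ii) says that `a k = ∑ d ∣ gcd (k, h), l d` for `k < h`,
and by periodicity for all `k`. Such a sum depends only on `gcd (k, h)`, which is (i). Conversely,
Möbius inversion writes any `a` as a divisor sum of some `l`, and evaluating at `gcd (k, h)`
gives (ii).
-/

theorem sum_range_div_apply_mul {M : Type*} [AddCommMonoid M] {d h : ℕ} (hd : d ∣ h)
    (f : ℕ → M) :
    ∑ j ∈ Finset.range (h / d), f (j * d) = ∑ k ∈ Finset.range h with d ∣ k, f k := by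
  obtain ⟨n, rfl⟩ := hd
  obtain rfl | hd := d.eq_zero_or_pos
  · simp
  have multiples : {k ∈ Finset.range (d * n) | d ∣ k} = (Finset.range n).image (· * d) := by
    ext k
    simp only [Finset.mem_filter, Finset.mem_range, Finset.mem_image]
    constructor
    · rintro ⟨hk, j, rfl⟩
      exact ⟨j, Nat.lt_of_mul_lt_mul_left hk, mul_comm j d⟩
    · rintro ⟨j, hj, rfl⟩
      exact ⟨mul_comm j d ▸ Nat.mul_lt_mul_of_pos_left hj hd, dvd_mul_left d j⟩
  rw [multiples, Finset.sum_image (mul_left_injective₀ hd.ne').injOn, Nat.mul_div_cancel_left n hd]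

theorem filter_dvd_divisors_eq_divisors_gcd {h : ℕ} (hh : h ≠ 0) (k : ℕ) :
    {d ∈ h.divisors | d ∣ k} = (k.gcd h).divisors := by
  rw [← Nat.divisors_filter_dvd_of_dvd hh (k.gcd_dvd_right h)]
  refine Finset.filter_congr fun d hd ↦ ?_
  rw [Nat.dvd_gcd_iff, and_iff_left (Nat.dvd_of_mem_divisors hd)]

theorem sum_divisors_C_mul_sum_X_pow {R : Type*} [Semiring R] {h : ℕ} (hh : h ≠ 0) (l : ℕ → R) :
    ∑ d ∈ h.divisors, C (l d) * ∑ j ∈ Finset.range (h / d), (X : R[X]) ^ (j * d) =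
      ∑ k ∈ Finset.range h, C (∑ d ∈ (k.gcd h).divisors, l d) * X ^ k := by
  calc
    _ = ∑ d ∈ h.divisors, ∑ k ∈ Finset.range h with d ∣ k, C (l d) * X ^ k :=
      Finset.sum_congr rfl fun d hd ↦ by
        rw [sum_range_div_apply_mul (Nat.dvd_of_mem_divisors hd) (X ^ ·), Finset.mul_sum]
    _ = ∑ k ∈ Finset.range h, ∑ d ∈ h.divisors with d ∣ k, C (l d) * X ^ k := by
      simp only [Finset.sum_filter]
      exact Finset.sum_comm
    _ = _ := by
      simp only [filter_dvd_divisors_eq_divisors_gcd hh, map_sum, Finset.sum_mul]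

theorem sum_range_C_mul_X_pow_inj {R : Type*} [Semiring R] {n : ℕ} {a b : ℕ → R} :
    ∑ k ∈ Finset.range n, C (a k) * X ^ k = ∑ k ∈ Finset.range n, C (b k) * X ^ k ↔
      ∀ k < n, a k = b k := by
  constructor
  · intro hab k hk
    simpa [finsetSum_coeff, coeff_C_mul_X_pow, hk] using congrArg (coeff · k) hab
  · intro hab
    exact Finset.sum_congr rfl fun k hk ↦ by rw [hab k (Finset.mem_range.1 hk)]

theorem forall_lt_eq_iff_of_periodic {α : Type*} {f g : ℕ → α} {h : ℕ} (hh : 0 < h)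
    (hf : Function.Periodic f h) (hg : Function.Periodic g h) :
    (∀ k < h, f k = g k) ↔ ∀ k, f k = g k := by
  refine ⟨fun hfg k ↦ ?_, fun hfg k _ ↦ hfg k⟩
  rw [← hf.map_mod_nat k, ← hg.map_mod_nat k, hfg _ (k.mod_lt hh)]

theorem periodic_apply_gcd {α : Type*} (f : ℕ → α) (h : ℕ) :
    Function.Periodic (fun k ↦ f (k.gcd h)) h :=
  fun k ↦ congrArg f (Nat.gcd_add_self_left h k)

theorem exists_sum_divisors_eq {G : Type*} [AddCommGroup G] (a : ℕ → G) :
    ∃ l : ℕ → G, ∀ n > 0, ∑ d ∈ n.divisors, l d = a n :=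
  ⟨_, ArithmeticFunction.sum_eq_iff_sum_smul_moebius_eq.2 fun _ _ ↦ rfl⟩

theorem forall_eq_apply_gcd_iff_exists_sum_divisors {G : Type*} [AddCommGroup G] {h : ℕ}
    (hh : 0 < h) (a : ℕ → G) :
    (∀ k, a k = a (k.gcd h)) ↔ ∃ l : ℕ → G, ∀ k, a k = ∑ d ∈ (k.gcd h).divisors, l d := by
  constructor
  · intro ha
    obtain ⟨l, hl⟩ := exists_sum_divisors_eq a
    exact ⟨l, fun k ↦ by rw [hl _ (k.gcd_pos_of_pos_right hh), ← ha k]⟩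
  · rintro ⟨l, hl⟩ k
    rw [hl k, hl (k.gcd h), Nat.gcd_assoc, Nat.gcd_self]

theorem forall_one_le_eq_apply_gcd_iff {α : Type*} {a : ℕ → α} {h : ℕ}
    (ha : Function.Periodic a h) :
    (∀ k, 1 ≤ k → a k = a (k.gcd h)) ↔ ∀ k, a k = a (k.gcd h) := by
  refine ⟨fun hgcd k ↦ ?_, fun hgcd k _ ↦ hgcd k⟩
  obtain rfl | hk := k.eq_zero_or_pos
  · rw [Nat.gcd_zero_left, ha.eq]
  · exact hgcd k hk

theorem stmt_13_general {R : Type*} [Ring R] {h : ℕ} (hh : 0 < h) {a : ℕ → R}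
    (ha : Function.Periodic a h) :
    (∀ k, 1 ≤ k → a k = a (k.gcd h)) ↔
      ∃ l : ℕ → R,
        ∑ k ∈ Finset.range h, C (a k) * X ^ k =
          ∑ d ∈ h.divisors, C (l d) * ∑ j ∈ Finset.range (h / d), (X : R[X]) ^ (j * d) := by
  rw [forall_one_le_eq_apply_gcd_iff ha, forall_eq_apply_gcd_iff_exists_sum_divisors hh]
  refine exists_congr fun l ↦ ?_
  rw [sum_divisors_C_mul_sum_X_pow hh.ne', sum_range_C_mul_X_pow_inj]
  exact (forall_lt_eq_iff_of_periodic hh ha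
    (periodic_apply_gcd (fun n ↦ ∑ d ∈ n.divisors, l d) h)).symm

/-- For an `h`-periodic function `a : ℕ → ℂ`, the following are
equivalent: (i) `a(k) = a(gcd(k,h))` for all `k ≥ 1` (`a` is an `h`-Cohen function);
(ii) there is `l : ℕ → ℂ` with `∑_{k<h} a(k) q^k = ∑_{d ∣ h} l(d) ∑_{j<h/d} q^{jd}`
in `ℂ[q]` (the Munagi decomposition has all numerators constant). -/
theorem stmt_13 (h : ℕ) (hh : 0 < h)
    (a : ℕ → ℂ) (hper : ∀ k : ℕ, a (k + h) = a k) :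
    (∀ k : ℕ, 1 ≤ k → a k = a (Nat.gcd k h)) ↔
      (∃ l : ℕ → ℂ,
        ∑ k ∈ Finset.range h, C (a k) * X ^ k =
          ∑ d ∈ h.divisors, C (l d) *
            ∑ j ∈ Finset.range (h / d), (X : Polynomial ℂ) ^ (j * d)) :=
  stmt_13_general hh hper
end

section
/- Let h ≥ 2 be an integer and e : ℕ → ℤ any function with ∑_{d | h} e(d) = 0. Define m(k) := ∑_{d | gcd(k, h)} e(h/d) for 1 ≤ k ≤ h−1, set n := ∑_{d | h} d·e(d), and let B(q) := ∑_{k=1}^{h−1} m(k) · ∑_{j=0}^{k−1} q^j. Then the polynomial identity (1 − q) · B(q) = n − ∑_{d | h} e(h/d) · ∑_{j=0}^{h/d − 1} q^{jd} holds in ℤ[q]. -/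
open Polynomial

/-!
Telescoping the geometric sums turns `(1 - q) B(q)` into `∑_{k < h} m(k) (1 - q ^ k)`, where the
term `k = 0` vanishes. Since `m(k)` sums `e(h / d)` over the divisors `d` of `h` that divide `k`,
exchanging the two sums leaves, for each `d ∣ h`, the sum of `1 - q ^ k` over the `h / d` multiples
`k` of `d` below `h`. The constant terms `e(h / d) (h / d)` add up to `n` under the involution
`d ↦ h / d`.
-/

theorem sum_Icc_one_pred_eq_sum_range {M : Type*} [AddCommMonoid M] {f : ℕ → M} (hf : f 0 = 0)
    (h : ℕ) : ∑ k ∈ Finset.Icc 1 (h - 1), f k = ∑ k ∈ Finset.range h, f k := by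
  refine Finset.sum_subset (fun k hk => ?_) fun k hk hk' => ?_
  · grind
  · obtain rfl : k = 0 := by grind
    exact hf

theorem divisors_gcd_eq_filter_dvd (k : ℕ) {h : ℕ} (hh : h ≠ 0) :
    (k.gcd h).divisors = {d ∈ h.divisors | d ∣ k} := by
  ext d
  simp [Nat.dvd_gcd_iff, hh, and_comm]

theorem filter_dvd_range_mul {d : ℕ} (hd : 0 < d) (c : ℕ) :
    {k ∈ Finset.range (c * d) | d ∣ k} = (Finset.range c).image (· * d) := by
  ext k
  simp only [Finset.mem_filter, Finset.mem_range, Finset.mem_image]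
  constructor
  · rintro ⟨hk, j, rfl⟩
    exact ⟨j, Nat.lt_of_mul_lt_mul_left (mul_comm c d ▸ hk), mul_comm j d⟩
  · rintro ⟨j, hj, rfl⟩
    exact ⟨Nat.mul_lt_mul_of_pos_right hj hd, dvd_mul_left d j⟩

theorem sum_range_filter_dvd {M : Type*} [AddCommMonoid M] {d h : ℕ} (hd : 0 < d) (hdh : d ∣ h)
    (f : ℕ → M) :
    ∑ k ∈ Finset.range h with d ∣ k, f k = ∑ j ∈ Finset.range (h / d), f (j * d) := by
  obtain ⟨c, rfl⟩ := exists_eq_mul_left_of_dvd hdh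
  rw [filter_dvd_range_mul hd, Nat.mul_div_cancel c hd,
    Finset.sum_image (mul_left_injective₀ hd.ne').injOn]

theorem sum_range_sum_divisors_gcd_mul {R : Type*} [NonUnitalNonAssocSemiring R] {h : ℕ}
    (hh : h ≠ 0) (g f : ℕ → R) :
    ∑ k ∈ Finset.range h, (∑ d ∈ (k.gcd h).divisors, g d) * f k =
      ∑ d ∈ h.divisors, g d * ∑ j ∈ Finset.range (h / d), f (j * d) := by
  calc ∑ k ∈ Finset.range h, (∑ d ∈ (k.gcd h).divisors, g d) * f k
      = ∑ k ∈ Finset.range h, ∑ d ∈ h.divisors with d ∣ k, g d * f k := by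
        simp only [divisors_gcd_eq_filter_dvd _ hh, Finset.sum_mul]
    _ = ∑ d ∈ h.divisors, ∑ k ∈ Finset.range h with d ∣ k, g d * f k := by
        simp only [Finset.sum_filter]
        exact Finset.sum_comm
    _ = ∑ d ∈ h.divisors, g d * ∑ j ∈ Finset.range (h / d), f (j * d) := by
        refine Finset.sum_congr rfl fun d hd => ?_
        rw [← Finset.mul_sum, sum_range_filter_dvd (Nat.pos_of_mem_divisors hd)
          (Nat.dvd_of_mem_divisors hd)]

theorem sum_divisors_div_mul {R : Type*} [NonAssocSemiring R] (h : ℕ) (e : ℕ → R) :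
    ∑ d ∈ h.divisors, e (h / d) * (h / d : ℕ) = ∑ d ∈ h.divisors, (d : R) * e d := by
  simp only [← (Nat.cast_commute _ _).eq]
  exact Nat.sum_div_divisors h fun d => (d : R) * e d

section Polynomial

variable {R : Type*} [Ring R]

theorem one_sub_X_mul_sum_C_mul_geom_sum (s : Finset ℕ) (m : ℕ → R) :
    (1 - X) * ∑ k ∈ s, C (m k) * ∑ j ∈ Finset.range k, X ^ j =
      ∑ k ∈ s, C (m k) * (1 - X ^ k) := by
  rw [Finset.mul_sum]
  refine Finset.sum_congr rfl fun k _ => ?_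
  have hcomm : Commute (1 - X) (C (m k)) := (Commute.one_left _).sub_left (commute_X _)
  rw [hcomm.left_comm, mul_neg_geom_sum]

theorem stmt_14_general {h : ℕ} (hh : h ≠ 0) (e m : ℕ → R)
    (hm : ∀ k, m k = ∑ d ∈ (k.gcd h).divisors, e (h / d))
    (n : R) (hn : n = ∑ d ∈ h.divisors, (d : R) * e d)
    (B : R[X])
    (hB : B = ∑ k ∈ Finset.Icc 1 (h - 1), C (m k) * ∑ j ∈ Finset.range k, X ^ j) :
    (1 - X) * B =
      C n - ∑ d ∈ h.divisors, C (e (h / d)) * ∑ j ∈ Finset.range (h / d), X ^ (j * d) := by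
  calc (1 - X) * B
      = ∑ k ∈ Finset.range h, C (m k) * (1 - X ^ k) := by
        rw [hB, one_sub_X_mul_sum_C_mul_geom_sum, sum_Icc_one_pred_eq_sum_range (by simp)]
    _ = ∑ d ∈ h.divisors, C (e (h / d)) * ∑ j ∈ Finset.range (h / d), (1 - X ^ (j * d)) := by
        simp only [hm, map_sum]
        exact sum_range_sum_divisors_gcd_mul hh (fun d => C (e (h / d))) (fun k => 1 - X ^ k)
    _ = C n - ∑ d ∈ h.divisors, C (e (h / d)) * ∑ j ∈ Finset.range (h / d), X ^ (j * d) := by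
        rw [hn, ← sum_divisors_div_mul, map_sum]
        simp [mul_sub]

end Polynomial

/-- Let `h ≥ 2` and `e : ℕ → ℤ` with `∑_{d ∣ h} e(d) = 0`. With
`m(k) := ∑_{d ∣ gcd(k,h)} e(h/d)`, `n := ∑_{d ∣ h} d·e(d)` and
`B(q) := ∑_{k=1}^{h−1} m(k) (1 + q + ⋯ + q^{k−1})`, the identity
`(1 − q) B(q) = n − ∑_{d ∣ h} e(h/d) ∑_{j<h/d} q^{jd}` holds in `ℤ[q]`. -/
theorem stmt_14 (h : ℕ) (hh : 2 ≤ h) (e : ℕ → ℤ)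
    (he : ∑ d ∈ h.divisors, e d = 0)
    (m : ℕ → ℤ) (hm : ∀ k : ℕ, m k = ∑ d ∈ (Nat.gcd k h).divisors, e (h / d))
    (n : ℤ) (hn : n = ∑ d ∈ h.divisors, (d : ℤ) * e d)
    (B : Polynomial ℤ)
    (hB : B = ∑ k ∈ Finset.Icc 1 (h - 1), C (m k) * ∑ j ∈ Finset.range k, X ^ j) :
    (1 - X) * B =
      C n - ∑ d ∈ h.divisors, C (e (h / d)) *
        ∑ j ∈ Finset.range (h / d), (X : Polynomial ℤ) ^ (j * d) :=
  stmt_14_general (by omega) e m hm n hn B hB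
end

section
/- Let h ≥ 4 be an integer, n ∈ ℂ, and b₁, …, b_{h−1} ∈ ℂ with b₁ = n, b₂ = n − 1 and b_{h−1} = 1. Suppose that for each divisor d of h there is a polynomial E_d ∈ ℂ[q] with deg E_d < φ(d) such that ∑_{k=1}^{h−1} b_k q^{k−1} = ∑_{d | h} E_d(q) · ∑_{j=0}^{h/d − 1} q^{jd} in ℂ[q]. Then: (a) E₁ = 0; (b) ∑_{d | h} E_d(0) = n; (c) ∑_{d | h} (coefficient of q in E_d) = n − 1; and (d) ∑_{d | h, d prime} (coefficient of q^{φ(d)−1} in E_d) = 1. -/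
open Polynomial

/-!
For `d ∣ h` and `deg E_d < d`, the product `E_d * ∑_{j < h/d} q^{jd}` repeats the coefficients of
`E_d` with period `d` up to degree `h - 1`, so comparing coefficients of `q^m` for `m < h` gives
`b_{m+1} = ∑_{d ∣ h} [q^{m mod d}] E_d`, with `b_h = 0`. The theorem consists of the cases
`m = h - 1, 0, 1, h - 2`. Modulo `d` the first and last are `d - 1` and `d - 2` (for `d > 1`).
Since `φ(d) ≤ d - 1` for `d > 1`, with equality exactly for primes, `deg E_d < φ(d)` leaves only
`d = 1` at `m = h - 1`, and at `m = h - 2` only the top coefficients for `d` prime, once `E_1 = 0`.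
-/

section Semiring

variable {R : Type*} [Semiring R] {P : R[X]} {E : ℕ → R[X]} {d h m N : ℕ}

theorem coeff_mul_sum_X_pow_mul (hP : P.degree < d) (hm : m < N * d) :
    (P * ∑ j ∈ Finset.range N, (X : R[X]) ^ (j * d)).coeff m = P.coeff (m % d) := by
  have hd : 0 < d := Nat.pos_of_mul_pos_left (Nat.zero_lt_of_lt hm)
  rw [Finset.mul_sum, finsetSum_coeff, Finset.sum_eq_single (m / d)]
  · rw [coeff_mul_X_pow', if_pos (Nat.div_mul_le_self m d), ← Nat.mod_eq_sub_div_mul]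
  · intro j _ hj
    rw [coeff_mul_X_pow', ite_eq_right_iff]
    intro hjm
    have hj_lt : j < m / d := lt_of_le_of_ne ((Nat.le_div_iff_mul_le hd).2 hjm) hj
    have hd_le : d ≤ m - j * d := by
      have := (Nat.le_div_iff_mul_le hd).1 (Nat.succ_le_of_lt hj_lt)
      rw [Nat.succ_mul] at this
      omega
    exact coeff_eq_zero_of_degree_lt (hP.trans_le (Nat.cast_le.2 hd_le))
  · intro hmem
    exact absurd (Finset.mem_range.2 ((Nat.div_lt_iff_lt_mul hd).2 hm)) hmem

theorem coeff_sum_divisors_mul_sum_X_pow_mul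
    (hE : ∀ d ∈ h.divisors, (E d).degree < d) (hm : m < h) :
    (∑ d ∈ h.divisors, E d * ∑ j ∈ Finset.range (h / d), (X : R[X]) ^ (j * d)).coeff m =
      ∑ d ∈ h.divisors, (E d).coeff (m % d) := by
  rw [finsetSum_coeff]
  refine Finset.sum_congr rfl fun d hd ↦ coeff_mul_sum_X_pow_mul (hE d hd) ?_
  rwa [Nat.div_mul_cancel (Nat.dvd_of_mem_divisors hd)]

theorem coeff_sum_Icc_C_mul_X_pow_sub_one (b : ℕ → R) :
    (∑ k ∈ Finset.Icc 1 N, C (b k) * X ^ (k - 1)).coeff m = if m < N then b (m + 1) else 0 := by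
  simp [← Finset.Ico_add_one_right_eq_Icc, Finset.sum_Ico_eq_sum_range, coeff_X_pow, add_comm 1]

theorem degree_lt_of_degree_lt_totient (hP : P.degree < d.totient) : P.degree < d :=
  hP.trans_le (Nat.cast_le.2 (Nat.totient_le d))

theorem coeff_sub_one_eq_zero_of_degree_lt_totient (hP : P.degree < d.totient) (hd : 1 < d) :
    P.coeff (d - 1) = 0 :=
  coeff_eq_zero_of_degree_lt <|
    hP.trans_le (Nat.cast_le.2 (Nat.le_sub_one_of_lt (d.totient_lt hd)))

theorem coeff_sub_two_of_degree_lt_totient (hP : P.degree < d.totient) (hd : 1 < d) :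
    P.coeff (d - 2) = if d.Prime then P.coeff (d.totient - 1) else 0 := by
  split_ifs with hprime
  · rw [Nat.totient_prime hprime, Nat.sub_sub]
  · have hlt : d.totient < d := Nat.totient_lt d hd
    have hne : d.totient ≠ d - 1 := fun heq ↦
      hprime ((Nat.totient_eq_iff_prime (Nat.zero_lt_of_lt hd)).1 heq)
    exact coeff_eq_zero_of_degree_lt (hP.trans_le (Nat.cast_le.2 (by omega)))

theorem sum_divisors_coeff_sub_one_mod (hh : h ≠ 0)
    (hE : ∀ d ∈ h.divisors, (E d).degree < d.totient) :
    ∑ d ∈ h.divisors, (E d).coeff ((h - 1) % d) = (E 1).coeff 0 := by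
  rw [Finset.sum_eq_single_of_mem 1 (Nat.one_mem_divisors.2 hh), Nat.mod_one]
  intro d hd hd1
  have hdpos : 0 < d := Nat.pos_of_mem_divisors hd
  have hmod : (h - 1) % d = d - 1 := by
    rw [Nat.mod_eq_sub_iff one_pos hdpos, Nat.sub_add_cancel (Nat.one_le_iff_ne_zero.2 hh)]
    exact Nat.dvd_of_mem_divisors hd
  rw [hmod, coeff_sub_one_eq_zero_of_degree_lt_totient (hE d hd) (by omega)]

theorem sum_coeff_one_mod (s : Finset ℕ) (hE1 : E 1 = 0) :
    ∑ d ∈ s, (E d).coeff (1 % d) = ∑ d ∈ s, (E d).coeff 1 := by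
  refine Finset.sum_congr rfl fun d _ ↦ ?_
  obtain rfl | hd1 := eq_or_ne d 1
  · simp [hE1]
  · rw [Nat.one_mod_eq_one.2 hd1]

theorem sum_divisors_coeff_sub_two_mod
    (hE : ∀ d ∈ h.divisors, (E d).degree < d.totient) (hE1 : E 1 = 0) :
    ∑ d ∈ h.divisors, (E d).coeff ((h - 2) % d) =
      ∑ d ∈ h.divisors.filter Nat.Prime, (E d).coeff (d.totient - 1) := by
  rw [Finset.sum_filter]
  refine Finset.sum_congr rfl fun d hd ↦ ?_
  obtain rfl | hd1 := eq_or_ne d 1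
  · simp [hE1]
  · have hd_gt : 1 < d := by
      have := Nat.pos_of_mem_divisors hd
      omega
    have hh : 2 ≤ h := hd_gt.trans_le (Nat.divisor_le hd)
    have hmod : (h - 2) % d = d - 2 := by
      rw [Nat.mod_eq_sub_iff two_pos hd_gt, Nat.sub_add_cancel hh]
      exact Nat.dvd_of_mem_divisors hd
    rw [hmod, coeff_sub_two_of_degree_lt_totient (hE d hd) hd_gt]

end Semiring

theorem stmt_15_general {R : Type*} [Semiring R] (h : ℕ) (hh : 3 ≤ h) (b : ℕ → R) (E : ℕ → R[X])
    (hdeg : ∀ d ∈ h.divisors, (E d).degree < (d.totient : WithBot ℕ))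
    (hdecomp : ∑ k ∈ Finset.Icc 1 (h - 1), C (b k) * X ^ (k - 1) =
      ∑ d ∈ h.divisors, E d * ∑ j ∈ Finset.range (h / d), (X : R[X]) ^ (j * d)) :
    E 1 = 0 ∧
    (∑ d ∈ h.divisors, (E d).coeff 0) = b 1 ∧
    (∑ d ∈ h.divisors, (E d).coeff 1) = b 2 ∧
    (∑ d ∈ h.divisors.filter Nat.Prime, (E d).coeff (d.totient - 1)) = b (h - 1) := by
  have sum_coeff_mod (m : ℕ) (hm : m < h) :
      ∑ d ∈ h.divisors, (E d).coeff (m % d) = if m < h - 1 then b (m + 1) else 0 := by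
    rw [← coeff_sum_Icc_C_mul_X_pow_sub_one, hdecomp, coeff_sum_divisors_mul_sum_X_pow_mul
      (fun d hd ↦ degree_lt_of_degree_lt_totient (hdeg d hd)) hm]
  have hE1 : E 1 = 0 := by
    have hconst : (E 1).degree ≤ 0 :=
      Nat.WithBot.lt_one_iff_le_zero.1 (hdeg 1 (Nat.one_mem_divisors.2 (by omega)))
    rw [eq_C_of_degree_le_zero hconst, ← sum_divisors_coeff_sub_one_mod (by omega) hdeg,
      sum_coeff_mod (h - 1) (by omega), if_neg (lt_irrefl _), C_0]
  refine ⟨hE1, ?_, ?_, ?_⟩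
  · simpa [show 0 < h - 1 by omega] using sum_coeff_mod 0 (by omega)
  · rw [← sum_coeff_one_mod _ hE1, sum_coeff_mod 1 (by omega), if_pos (by omega)]
  · rw [← sum_divisors_coeff_sub_two_mod hdeg hE1, sum_coeff_mod (h - 2) (by omega),
      if_pos (by omega), show h - 2 + 1 = h - 1 by omega]

/-- Let `h ≥ 4`, `n ∈ ℂ`, and `b₁, …, b_{h−1} ∈ ℂ` with `b₁ = n`,
`b₂ = n − 1`, `b_{h−1} = 1`. If for each `d ∣ h` there is `E_d ∈ ℂ[q]` with
`deg E_d < φ(d)` and `∑_{k=1}^{h−1} b_k q^{k−1} = ∑_{d ∣ h} E_d(q) ∑_{j<h/d} q^{jd}`,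
then (a) `E₁ = 0`; (b) `∑_{d ∣ h} E_d(0) = n`; (c) `∑_{d ∣ h} [q¹]E_d = n − 1`;
(d) `∑_{d ∣ h, d prime} [q^{φ(d)−1}]E_d = 1`. -/
theorem stmt_15 (h : ℕ) (hh : 4 ≤ h) (n : ℂ) (b : ℕ → ℂ)
    (hb1 : b 1 = n) (hb2 : b 2 = n - 1) (hbh : b (h - 1) = 1)
    (E : ℕ → Polynomial ℂ)
    (hdeg : ∀ d ∈ h.divisors, (E d).degree < (d.totient : WithBot ℕ))
    (hdecomp : ∑ k ∈ Finset.Icc 1 (h - 1), C (b k) * X ^ (k - 1) =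
      ∑ d ∈ h.divisors, E d * ∑ j ∈ Finset.range (h / d), (X : Polynomial ℂ) ^ (j * d)) :
    E 1 = 0 ∧
    (∑ d ∈ h.divisors, (E d).coeff 0) = n ∧
    (∑ d ∈ h.divisors, (E d).coeff 1) = n - 1 ∧
    (∑ d ∈ h.divisors.filter Nat.Prime, (E d).coeff (d.totient - 1)) = 1 := by
  simpa only [hb1, hb2, hbh] using stmt_15_general h (by omega) b E hdeg hdecomp
end

section
/- Let h and m be integers with h ≥ 1 and 1 ≤ m ≤ h. Then ∑_{d | h, d > 1} ∑_{ζ} ζ^m/(1 − ζ) = m − (h + 1)/2, i.e. equals (2m − h − 1)/2, where for each divisor d > 1 of h the inner sum runs over all primitive d-th roots of unity ζ in ℂ. -/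
/-!
Grouped by their order, the terms range over the `h`-th roots of unity `ζ ≠ 1`. By the geometric
series, `ζ ^ m / (1 - ζ) = (1 - ζ)⁻¹ - ∑_{k < m} ζ ^ k`. The first part sums to `(h - 1) / 2`,
because `(1 - ζ)⁻¹ + (1 - ζ⁻¹)⁻¹ = 1`. In the second part, only `k = 0` contributes when summing
over all `h`-th roots of unity, which gives `h`; removing the term `m` of `ζ = 1` leaves `h - m`.
-/

open Finset Polynomial

section IsDomain

variable {R : Type*} [CommRing R] [IsDomain R] {ω : R} {n k m : ℕ}

theorem sum_nthRootsFinset_one_pow_eq_zero (hω : ω ∈ nthRootsFinset n (1 : R)) (hk : ω ^ k ≠ 1) :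
    ∑ ζ ∈ nthRootsFinset n (1 : R), ζ ^ k = 0 := by
  have mapsTo : ∀ ζ ∈ nthRootsFinset n (1 : R), ω * ζ ∈ nthRootsFinset n (1 : R) :=
    fun ζ hζ ↦ by simpa only [one_mul] using mul_mem_nthRootsFinset hω hζ
  have injOn : Set.InjOn (ω * ·) (nthRootsFinset n (1 : R)) :=
    (mul_right_injective₀ (ne_zero_of_mem_nthRootsFinset one_ne_zero hω)).injOn
  have rotate : ω ^ k * ∑ ζ ∈ nthRootsFinset n (1 : R), ζ ^ k =
      ∑ ζ ∈ nthRootsFinset n (1 : R), ζ ^ k := by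
    rw [mul_sum]
    exact sum_nbij (ω * ·) mapsTo injOn (surjOn_of_injOn_of_card_le _ mapsTo injOn le_rfl)
      fun ζ _ ↦ (mul_pow ω ζ k).symm
  exact (mul_left_eq_self₀.mp rotate).resolve_left hk

theorem sum_nthRootsFinset_one_geom_sum (hω : IsPrimitiveRoot ω n) (hm : 1 ≤ m) (hmn : m ≤ n) :
    ∑ ζ ∈ nthRootsFinset n (1 : R), ∑ k ∈ range m, ζ ^ k = n := by
  have hω_mem : ω ∈ nthRootsFinset n (1 : R) := hω.mem_nthRootsFinset (hm.trans hmn)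
  rw [sum_comm, sum_eq_single_of_mem 0 (mem_range.mpr hm)]
  · simp [hω.card_nthRootsFinset]
  · intro k hk hk0
    exact sum_nthRootsFinset_one_pow_eq_zero hω_mem
      (hω.pow_ne_one_of_pos_of_lt hk0 ((mem_range.mp hk).trans_le hmn))

variable [DecidableEq R]

theorem biUnion_primitiveRoots_divisors_one_lt (n : ℕ) :
    {d ∈ n.divisors | 1 < d}.biUnion (fun d ↦ primitiveRoots d R) =
      (nthRootsFinset n (1 : R)).erase 1 := by
  have one_lt_iff_ne_one {d : ℕ} {ζ : R} (hζ : ζ ∈ primitiveRoots d R) : 1 < d ↔ ζ ≠ 1 := by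
    have hprim : IsPrimitiveRoot ζ d := isPrimitiveRoot_of_mem_primitiveRoots hζ
    have hd : d ≠ 0 := by rintro rfl; simp at hζ
    rw [hprim.eq_orderOf] at hd ⊢
    rw [ne_eq, ← orderOf_eq_one_iff]
    omega
  ext ζ
  simp only [IsPrimitiveRoot.nthRoots_one_eq_biUnion_primitiveRoots, mem_biUnion, mem_filter,
    mem_erase]
  grind

theorem sum_divisors_one_lt_sum_primitiveRoots {M : Type*} [AddCommMonoid M] (n : ℕ) (f : R → M) :
    ∑ d ∈ n.divisors with 1 < d, ∑ ζ ∈ primitiveRoots d R, f ζ =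
      ∑ ζ ∈ (nthRootsFinset n (1 : R)).erase 1, f ζ := by
  rw [← biUnion_primitiveRoots_divisors_one_lt, sum_biUnion]
  exact fun _ _ _ _ hne ↦ IsPrimitiveRoot.disjoint hne

end IsDomain

section Field

variable {K : Type*} [Field K]

theorem inv_mem_nthRootsFinset_one {n : ℕ} {ζ : K} (hζ : ζ ∈ nthRootsFinset n (1 : K)) :
    ζ⁻¹ ∈ nthRootsFinset n (1 : K) := by
  rcases n.eq_zero_or_pos with rfl | hn
  · simp at hζ
  · rw [mem_nthRootsFinset hn] at hζ ⊢
    rw [inv_pow, hζ, inv_one]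

theorem inv_one_sub_add_inv_one_sub_inv {x : K} (hx0 : x ≠ 0) (hx1 : x ≠ 1) :
    (1 - x)⁻¹ + (1 - x⁻¹)⁻¹ = 1 := by
  have h1x : 1 - x ≠ 0 := sub_ne_zero.mpr hx1.symm
  have hinv : 1 - x⁻¹ = -(1 - x) / x := by field_simp; ring
  rw [hinv]
  field_simp
  ring

theorem pow_div_one_sub_eq_inv_sub_geom_sum {x : K} (hx : x ≠ 1) (m : ℕ) :
    x ^ m / (1 - x) = (1 - x)⁻¹ - ∑ k ∈ range m, x ^ k := by
  have h1x : 1 - x ≠ 0 := sub_ne_zero.mpr hx.symm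
  rw [div_eq_iff h1x, sub_mul, inv_mul_cancel₀ h1x, geom_sum_mul_neg, sub_sub_cancel]

variable [DecidableEq K]

theorem two_mul_sum_inv_one_sub_nthRootsFinset_one (n : ℕ) :
    2 * ∑ ζ ∈ (nthRootsFinset n (1 : K)).erase 1, (1 - ζ)⁻¹ =
      #((nthRootsFinset n (1 : K)).erase 1) := by
  have inv_mem : ∀ ζ ∈ (nthRootsFinset n (1 : K)).erase 1,
      ζ⁻¹ ∈ (nthRootsFinset n (1 : K)).erase 1 := fun ζ hζ ↦
    mem_erase.mpr ⟨inv_ne_one.mpr (ne_of_mem_erase hζ),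
      inv_mem_nthRootsFinset_one (mem_of_mem_erase hζ)⟩
  have reindex : ∑ ζ ∈ (nthRootsFinset n (1 : K)).erase 1, (1 - ζ)⁻¹ =
      ∑ ζ ∈ (nthRootsFinset n (1 : K)).erase 1, (1 - ζ⁻¹)⁻¹ :=
    sum_nbij' (·⁻¹) (·⁻¹) inv_mem inv_mem (by simp) (by simp) (by simp)
  calc 2 * ∑ ζ ∈ (nthRootsFinset n (1 : K)).erase 1, (1 - ζ)⁻¹
      = ∑ ζ ∈ (nthRootsFinset n (1 : K)).erase 1, ((1 - ζ)⁻¹ + (1 - ζ⁻¹)⁻¹) := by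
        rw [sum_add_distrib, ← reindex, two_mul]
    _ = ∑ ζ ∈ (nthRootsFinset n (1 : K)).erase 1, 1 :=
        sum_congr rfl fun ζ hζ ↦ inv_one_sub_add_inv_one_sub_inv
          (ne_zero_of_mem_nthRootsFinset one_ne_zero (mem_of_mem_erase hζ)) (ne_of_mem_erase hζ)
    _ = #((nthRootsFinset n (1 : K)).erase 1) := by rw [sum_const, nsmul_one]

theorem two_mul_sum_pow_div_one_sub_nthRootsFinset_one {ω : K} {n m : ℕ}
    (hω : IsPrimitiveRoot ω n) (hm : 1 ≤ m) (hmn : m ≤ n) :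
    2 * ∑ ζ ∈ (nthRootsFinset n (1 : K)).erase 1, ζ ^ m / (1 - ζ) = 2 * m - n - 1 := by
  have one_mem : (1 : K) ∈ nthRootsFinset n (1 : K) := one_mem_nthRootsFinset (hm.trans hmn)
  have sum_inv : 2 * ∑ ζ ∈ (nthRootsFinset n (1 : K)).erase 1, (1 - ζ)⁻¹ = (n : K) - 1 := by
    rw [two_mul_sum_inv_one_sub_nthRootsFinset_one, cast_card_erase_of_mem one_mem,
      hω.card_nthRootsFinset]
  have sum_geom : ∑ ζ ∈ (nthRootsFinset n (1 : K)).erase 1, ∑ k ∈ range m, ζ ^ k =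
      (n : K) - m := by
    rw [sum_erase_eq_sub one_mem, sum_nthRootsFinset_one_geom_sum hω hm hmn]
    simp
  rw [sum_congr rfl fun ζ hζ ↦ pow_div_one_sub_eq_inv_sub_geom_sum (ne_of_mem_erase hζ) m,
    sum_sub_distrib, mul_sub, sum_inv, sum_geom]
  ring

end Field

theorem stmt_17_general {K : Type*} [Field K] [NeZero (2 : K)] {ω : K} {h m : ℕ}
    (hω : IsPrimitiveRoot ω h) (hm1 : 1 ≤ m) (hm2 : m ≤ h) :
    ∑ d ∈ h.divisors with 1 < d, ∑ ζ ∈ primitiveRoots d K, ζ ^ m / (1 - ζ) =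
      (2 * (m : K) - (h : K) - 1) / 2 := by
  classical
  rw [sum_divisors_one_lt_sum_primitiveRoots, eq_div_iff two_ne_zero, mul_comm]
  exact two_mul_sum_pow_div_one_sub_nthRootsFinset_one hω hm1 hm2

/-- For integers `h ≥ 1` and `1 ≤ m ≤ h`,
`∑_{d ∣ h, d > 1} ∑_{ζ primitive d-th root of unity} ζ^m/(1 − ζ) = (2m − h − 1)/2`. -/
theorem stmt_17 (h m : ℕ) (hh : 1 ≤ h) (hm1 : 1 ≤ m) (hm2 : m ≤ h) :
    ∑ d ∈ h.divisors.filter (fun d => 1 < d),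
      ∑ ζ ∈ primitiveRoots d ℂ, ζ ^ m / (1 - ζ) =
      (2 * (m : ℂ) - (h : ℂ) - 1) / 2 :=
  stmt_17_general (Complex.isPrimitiveRoot_exp h (Nat.one_le_iff_ne_zero.mp hh)) hm1 hm2
end

section
/- Let h ≥ 2 be an integer, n ∈ ℂ, and b₁, …, b_h ∈ ℂ with b_h = 0 and b_k + b_{h+1−k} = n for all 1 ≤ k ≤ h. Suppose that for each divisor d of h there is a polynomial E_d ∈ ℂ[q] with deg E_d < φ(d) such that ∑_{k=1}^{h−1} b_k q^{k−1} = ∑_{d | h} E_d(q) · ∑_{j=0}^{h/d − 1} q^{jd} in ℂ[q]. For a divisor d of h write Ẽ_d(q) := ∑_i (coefficient of q^i in E_d) · q^{d−1−i}, the degree-(d−1) reversal of E_d (so Ẽ_d(q) = q^{d−1} E_d(1/q)). Then the polynomial identity n · ∑_{j=0}^{h−1} q^j = ∑_{d | h} (E_d(q) + Ẽ_d(q)) · ∑_{j=0}^{h/d − 1} q^{jd} holds in ℂ[q]. -/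
open Polynomial

/-!
The polynomial `S_d = ∑_{j < h/d} q^{jd}` is palindromic of degree `h - d`, so reversing
coefficients in degree `h - 1 = (d - 1) + (h - d)` sends `E_d S_d` to `Ẽ_d S_d`. Hence the sum over
`d` of `(E_d + Ẽ_d) S_d` is `B = ∑ b_k q^{k-1}` plus its own reversal, whose coefficients are
`b_k + b_{h+1-k} = n`.
-/

section

variable {R : Type*} [Semiring R]

lemma natDegree_lt_of_degree_lt {p : R[X]} {d : ℕ} (hd : 0 < d) (hp : p.degree < d) :
    p.natDegree < d :=
  (WithBot.unbotD_lt_iff fun _ => hd).mpr hp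

lemma sum_Icc_one_C_mul_X_pow_sub_one (N : ℕ) (b : ℕ → R) :
    ∑ k ∈ Finset.Icc 1 N, C (b k) * X ^ (k - 1) =
      ∑ i ∈ Finset.range N, C (b (i + 1)) * X ^ i := by
  rw [← Finset.Ico_add_one_right_eq_Icc, Finset.sum_Ico_eq_sum_range]
  simp only [Nat.add_sub_cancel, add_comm 1]

lemma reflect_sum {ι : Type*} (N : ℕ) (s : Finset ι) (f : ι → R[X]) :
    reflect N (∑ i ∈ s, f i) = ∑ i ∈ s, reflect N (f i) :=
  map_sum (⟨⟨reflect N, reflect_zero⟩, fun p q => reflect_add p q N⟩ : R[X] →+ R[X]) f s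

lemma reflect_sum_range_C_mul_X_pow (N : ℕ) (c : ℕ → R) :
    reflect (N - 1) (∑ i ∈ Finset.range N, C (c i) * X ^ i) =
      ∑ i ∈ Finset.range N, C (c i) * X ^ (N - 1 - i) := by
  rw [reflect_sum]
  refine Finset.sum_congr rfl fun i hi => ?_
  rw [reflect_C_mul_X_pow, revAt_le (Nat.le_sub_one_of_lt (Finset.mem_range.mp hi))]

lemma reflect_eq_sum_range_of_natDegree_lt {p : R[X]} {d : ℕ} (hp : p.natDegree < d) :
    reflect (d - 1) p = ∑ i ∈ Finset.range d, C (p.coeff i) * X ^ (d - 1 - i) := by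
  conv_lhs => rw [p.as_sum_range_C_mul_X_pow' hp]
  exact reflect_sum_range_C_mul_X_pow d p.coeff

lemma natDegree_sum_range_X_pow_mul_le (m d : ℕ) :
    (∑ j ∈ Finset.range m, (X : R[X]) ^ (j * d)).natDegree ≤ (m - 1) * d :=
  natDegree_sum_le_of_forall_le _ _ fun _ hj => (natDegree_X_pow_le _).trans
    (Nat.mul_le_mul_right d (Nat.le_sub_one_of_lt (Finset.mem_range.mp hj)))

lemma reflect_sum_range_X_pow_mul (m d : ℕ) :
    reflect ((m - 1) * d) (∑ j ∈ Finset.range m, (X : R[X]) ^ (j * d)) =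
      ∑ j ∈ Finset.range m, X ^ (j * d) := by
  rw [reflect_sum, ← Finset.sum_range_reflect (fun j => (X : R[X]) ^ (j * d))]
  refine Finset.sum_congr rfl fun j hj => ?_
  have hj_le : j ≤ m - 1 := Nat.le_sub_one_of_lt (Finset.mem_range.mp hj)
  rw [reflect_monomial, revAt_le (Nat.mul_le_mul_right d hj_le), ← Nat.sub_mul]

lemma reflect_mul_sum_range_X_pow_mul {p : R[X]} {d : ℕ} (hp : p.natDegree < d) (m : ℕ) :
    reflect (m * d - 1) (p * ∑ j ∈ Finset.range m, X ^ (j * d)) =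
      reflect (d - 1) p * ∑ j ∈ Finset.range m, X ^ (j * d) := by
  rcases m with _ | m
  · simp
  have hsplit : (m + 1) * d - 1 = (d - 1) + (m + 1 - 1) * d := by
    rw [Nat.add_sub_cancel, add_one_mul]
    lia
  rw [hsplit, reflect_mul _ _ (Nat.le_sub_one_of_lt hp) (natDegree_sum_range_X_pow_mul_le _ d),
    reflect_sum_range_X_pow_mul]

lemma sum_range_C_mul_X_pow_add_reflect {N : ℕ} {c : ℕ → R} {n : R}
    (hc : ∀ i < N, c i + c (N - 1 - i) = n) :
    ∑ i ∈ Finset.range N, C (c i) * X ^ i +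
        reflect (N - 1) (∑ i ∈ Finset.range N, C (c i) * X ^ i) =
      C n * ∑ i ∈ Finset.range N, X ^ i := by
  rw [reflect_sum_range_C_mul_X_pow,
    ← Finset.sum_range_reflect (fun i => C (c i) * X ^ (N - 1 - i)),
    ← Finset.sum_add_distrib, Finset.mul_sum]
  refine Finset.sum_congr rfl fun i hi => ?_
  have hi_lt : i < N := Finset.mem_range.mp hi
  rw [Nat.sub_sub_self (Nat.le_sub_one_of_lt hi_lt), ← add_mul, ← C_add, hc i hi_lt]

lemma reflect_sum_divisors_mul_sum_range_X_pow_mul {h : ℕ} {E : ℕ → R[X]}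
    (hE : ∀ d ∈ h.divisors, (E d).natDegree < d) :
    reflect (h - 1) (∑ d ∈ h.divisors, E d * ∑ j ∈ Finset.range (h / d), X ^ (j * d)) =
      ∑ d ∈ h.divisors, reflect (d - 1) (E d) * ∑ j ∈ Finset.range (h / d), X ^ (j * d) := by
  rw [reflect_sum]
  refine Finset.sum_congr rfl fun d hd => ?_
  rw [← reflect_mul_sum_range_X_pow_mul (hE d hd), Nat.div_mul_cancel (Nat.dvd_of_mem_divisors hd)]

end

theorem stmt_18_general {R : Type*} [Semiring R] (h : ℕ) (n : R) (b : ℕ → R)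
    (hsym : ∀ k : ℕ, 1 ≤ k → k ≤ h → b k + b (h + 1 - k) = n)
    (E : ℕ → R[X]) (hdeg : ∀ d ∈ h.divisors, (E d).degree < d)
    (hdecomp : ∑ k ∈ Finset.Icc 1 h, C (b k) * X ^ (k - 1) =
      ∑ d ∈ h.divisors, E d * ∑ j ∈ Finset.range (h / d), X ^ (j * d)) :
    C n * ∑ j ∈ Finset.range h, X ^ j =
      ∑ d ∈ h.divisors,
        (E d + ∑ i ∈ Finset.range d, C ((E d).coeff i) * X ^ (d - 1 - i)) *
          ∑ j ∈ Finset.range (h / d), X ^ (j * d) := by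
  have hnatDegree : ∀ d ∈ h.divisors, (E d).natDegree < d := fun d hd =>
    natDegree_lt_of_degree_lt (Nat.pos_of_mem_divisors hd) (hdeg d hd)
  have hsym_shift : ∀ i < h, b (i + 1) + b (h - 1 - i + 1) = n := fun i hi => by
    rw [← hsym (i + 1) (by lia) hi, show h - 1 - i + 1 = h + 1 - (i + 1) by lia]
  rw [← sum_range_C_mul_X_pow_add_reflect hsym_shift, ← sum_Icc_one_C_mul_X_pow_sub_one, hdecomp,
    reflect_sum_divisors_mul_sum_range_X_pow_mul hnatDegree, ← Finset.sum_add_distrib]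
  refine Finset.sum_congr rfl fun d hd => ?_
  rw [← add_mul, reflect_eq_sum_range_of_natDegree_lt (hnatDegree d hd)]

/-- Let `h ≥ 2`, `n ∈ ℂ`, and `b₁, …, b_h ∈ ℂ` with `b_h = 0` and the
symmetry `b_k + b_{h+1−k} = n` for `1 ≤ k ≤ h`. If for each `d ∣ h` there is
`E_d ∈ ℂ[q]` with `deg E_d < φ(d)` and
`∑_{k=1}^{h−1} b_k q^{k−1} = ∑_{d ∣ h} E_d(q) ∑_{j<h/d} q^{jd}`, then with
`Ẽ_d(q) := ∑_i ([q^i]E_d) q^{d−1−i}` (the degree-`(d−1)` reversal `q^{d−1}E_d(1/q)`),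
the identity `n ∑_{j<h} q^j = ∑_{d ∣ h} (E_d(q) + Ẽ_d(q)) ∑_{j<h/d} q^{jd}` holds. -/
theorem stmt_18 (h : ℕ) (hh : 2 ≤ h) (n : ℂ) (b : ℕ → ℂ)
    (hbh : b h = 0)
    (hsym : ∀ k : ℕ, 1 ≤ k → k ≤ h → b k + b (h + 1 - k) = n)
    (E : ℕ → Polynomial ℂ)
    (hdeg : ∀ d ∈ h.divisors, (E d).degree < (d.totient : WithBot ℕ))
    (hdecomp : ∑ k ∈ Finset.Icc 1 (h - 1), C (b k) * X ^ (k - 1) =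
      ∑ d ∈ h.divisors, E d * ∑ j ∈ Finset.range (h / d), (X : Polynomial ℂ) ^ (j * d)) :
    C n * ∑ j ∈ Finset.range h, (X : Polynomial ℂ) ^ j =
      ∑ d ∈ h.divisors,
        (E d + ∑ i ∈ Finset.range d, C ((E d).coeff i) * X ^ (d - 1 - i)) *
          ∑ j ∈ Finset.range (h / d), (X : Polynomial ℂ) ^ (j * d) := by
  obtain ⟨m, rfl⟩ := Nat.exists_eq_add_one.mpr (Nat.zero_lt_of_lt hh)
  exact stmt_18_general (m + 1) n b hsym E
    (fun d hd => (hdeg d hd).trans_le (mod_cast d.totient_le))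
    (by simpa [Finset.sum_Icc_succ_top, hbh] using hdecomp)
end
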